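/- arXiv:1304.2649 — 2 statements merged into one kernel-verified Lean document; each statement's English description precedes it below -/
import Mathlib

section
/- Let K be a φ-pseudo field and A ∈ GL_n(K). Let R be a K-φ-algebra (with endomorphism φ_R extending φ) that is a φ_R-pseudo domain, and suppose there is Y ∈ GL_n(R) with φ_R applied entrywise to Y equal to (algebraMap K R applied entrywise to A) · Y, such that R is generated as a K-algebra by the entries of Y together with (det Y)^{-1}. Let Q be the localization of R at its non-zero-divisors and let Φ : Q → Q be a ring endomorphism with Φ ∘ algebraMap R Q = algebraMap R Q ∘ φ_R. Then R is φ_R-simple if and only if every Φ-constant of Q is algebraic over K^φ, i.e., for every x ∈ Q with Φ(x) = x there is a nonzero polynomial with coefficients in the image of K^φ = {a ∈ K | φ(a) = a} in Q that vanishes at x. -/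
/-- A `φ`-ring `R` is `φ`-simple if the zero ideal and the whole ring are its only
`φ`-ideals (ideals `I` with `φ(I) ⊆ I`). -/
def DiffSimple {R : Type*} [CommRing R] (φ : R →+* R) : Prop :=
  (⊥ : Ideal R) ≠ ⊤ ∧ ∀ I : Ideal R, (∀ x ∈ I, φ x ∈ I) → I = ⊥ ∨ I = ⊤

/-- An ideal `p` of a ring with endomorphism `σ` is `σ`-pseudo prime if
`p = q ∩ σ⁻¹(q) ∩ … ∩ σ^{-(d-1)}(q)` for some `d ≥ 1` and some `σ^d`-prime ideal `q`. -/
def PseudoPrime {R : Type*} [CommRing R] (σ : R →+* R) (p : Ideal R) : Prop :=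
  ∃ d : ℕ, 1 ≤ d ∧ ∃ q : Ideal R, q.IsPrime ∧ Ideal.comap (σ ^ d) q = q ∧
    p = ⨅ i ∈ Finset.range d, Ideal.comap (σ ^ i) q

/-- A ring with endomorphism `φ` is a `φ`-pseudo domain if its zero ideal is
`φ`-pseudo prime. -/
def PseudoDomain {R : Type*} [CommRing R] (φ : R →+* R) : Prop :=
  PseudoPrime φ (⊥ : Ideal R)

/-- A `φ`-pseudo field is a `φ`-simple Noetherian `φ`-ring in which every
non-zero-divisor is a unit. -/
def PseudoField (R : Type*) [CommRing R] (φ : R →+* R) : Prop :=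
  DiffSimple φ ∧ IsNoetherianRing R ∧ ∀ x ∈ nonZeroDivisors R, IsUnit x

open Polynomial in
/-- If `c` is a transcendental element of a domain of finite type over a field, then some
`c ^ N - 1` with `N > 0` is not a unit. -/
theorem exists_pow_sub_one_not_isUnit {F T : Type*} [Field F] [CommRing T] [IsDomain T]
    [Algebra F T] [Algebra.FiniteType F T] {c : T} (hc : Transcendental F c) :
    ∃ N : ℕ, 0 < N ∧ ¬ IsUnit (c ^ N - 1) := by
  by_contra! hu
  let f : F[X] →+* T := (aeval c : F[X] →ₐ[F] T).toRingHom
  have hf : Function.Injective f := transcendental_iff_injective.mp hc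
  let : Algebra F[X] T := f.toAlgebra
  have : IsScalarTower F F[X] T := .of_algebraMap_eq fun a => by
    simp [RingHom.algebraMap_toAlgebra, f]
  have : Algebra.FiniteType F[X] T := .of_restrictScalars_finiteType F F[X] T
  have : FaithfulSMul F[X] T := (faithfulSMul_iff_algebraMap_injective _ _).mpr hf
  have : Algebra.FinitePresentation F[X] T := Algebra.FinitePresentation.of_finiteType.mp ‹_›
  have hopen := (PrimeSpectrum.isOpenMap_comap_of_hasGoingDown_of_finitePresentation
    (R := F[X]) (S := T)).isOpen_range
  obtain ⟨_, ⟨_, ⟨g, rfl⟩, rfl⟩, hxg, hgr⟩ :=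
    PrimeSpectrum.isBasis_basic_opens.exists_subset_of_mem_open
    (Set.mem_range_self (⊥ : PrimeSpectrum T)) hopen
  have hg : g ≠ 0 := by
    rintro rfl
    exact hxg (Ideal.zero_mem _)
  have key : ∀ N : ℕ, 0 < N → (N : F) ≠ 0 → N ≤ g.natDegree := by
    intro N hN hNF
    have hdvd : (X ^ N - 1 : F[X]) ∣ g := by
      have hrad : (Ideal.span {(X ^ N - 1 : F[X])}).IsRadical :=
        isRadical_iff_span_singleton.mp
          (X_pow_sub_one_separable_iff.mpr hNF).squarefree.isRadical
      rw [← Ideal.mem_span_singleton, ← hrad.radical, Ideal.radical_eq_sInf, Ideal.mem_sInf]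
      rintro P ⟨hP, hPp⟩
      by_contra hgP
      obtain ⟨Q, hQ⟩ := hgr (show (⟨P, hPp⟩ : PrimeSpectrum F[X]) ∈ _ from hgP)
      have hm : (X ^ N - 1 : F[X]) ∈ P := hP (Ideal.mem_span_singleton_self _)
      have hm' : (X ^ N - 1 : F[X]) ∈ (PrimeSpectrum.comap (algebraMap F[X] T) Q).asIdeal := by
        rw [hQ]; exact hm
      have hm'' : c ^ N - 1 ∈ Q.asIdeal := by
        simpa [RingHom.algebraMap_toAlgebra, f] using hm'
      exact Q.2.ne_top (Ideal.eq_top_of_isUnit_mem _ hm'' (hu N hN))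
    have := natDegree_le_of_dvd hdvd hg
    rwa [← C_1, natDegree_X_pow_sub_C] at this
  by_cases h : ((g.natDegree + 1 : ℕ) : F) = 0
  · have := key (g.natDegree + 2) (by omega) (by
      rw [show g.natDegree + 2 = (g.natDegree + 1) + 1 from rfl, Nat.cast_add, h]; simp)
    omega
  · have := key (g.natDegree + 1) (by omega) h
    omega

namespace DiffSimple

variable {K T : Type*} [CommRing K] [CommRing T] {φ : K →+* K} {ψ : T →+* T}

theorem nontrivial (h : DiffSimple φ) : Nontrivial K := by
  by_contra hK
  rw [not_nontrivial_iff_subsingleton] at hK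
  exact h.1 (Subsingleton.elim _ _)

theorem injective_of_equivariant [Nontrivial T] (h : DiffSimple φ) (f : K →+* T)
    (hf : ∀ a, ψ (f a) = f (φ a)) : Function.Injective f := by
  rw [RingHom.injective_iff_ker_eq_bot]
  refine (h.2 (RingHom.ker f) fun x hx => ?_).resolve_right (RingHom.ker_ne_top f)
  rw [RingHom.mem_ker] at hx ⊢
  rw [← hf, hx, map_zero]

theorem isUnit_of_fixed (h : DiffSimple φ) {a : K} (ha : φ a = a) (h0 : a ≠ 0) : IsUnit a := by
  rw [← Ideal.span_singleton_eq_top]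
  refine (h.2 (Ideal.span {a}) fun x hx => ?_).resolve_left (by simpa using h0)
  obtain ⟨y, rfl⟩ := Ideal.mem_span_singleton'.mp hx
  rw [map_mul, ha]
  exact Ideal.mul_mem_left _ _ (Ideal.mem_span_singleton_self a)

theorem isReduced (h : DiffSimple φ) : IsReduced K := by
  have := h.nontrivial
  have : nilradical K = ⊥ := by
    refine (h.2 (nilradical K) fun x hx => ?_).resolve_right ?_
    · rw [mem_nilradical] at hx ⊢
      exact hx.map φ
    · rw [Ideal.eq_top_iff_one, mem_nilradical]
      exact not_isNilpotent_one
  rwa [nilradical_eq_bot_iff] at this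

open Polynomial in
/-- If a constant `c` of a `φ`-algebra over a `φ`-simple ring is annihilated by a nonzero
polynomial, then it is annihilated by a monic polynomial with constant coefficients. -/
theorem exists_monic_map_eq_self (h : DiffSimple φ) (f : K →+* T)
    (hf : ∀ a, ψ (f a) = f (φ a)) {c : T} (hc : ψ c = c)
    (hp : ∃ p : K[X], p ≠ 0 ∧ p.eval₂ f c = 0) :
    ∃ p : K[X], p.Monic ∧ p.map φ = p ∧ p.eval₂ f c = 0 := by
  have hex : ∃ n : ℕ, ∃ p : K[X], p ≠ 0 ∧ p.eval₂ f c = 0 ∧ p.natDegree = n := by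
    obtain ⟨p, h0, hpc⟩ := hp
    exact ⟨_, p, h0, hpc, rfl⟩
  classical
  obtain ⟨p, hp0, hpc, hpn⟩ := Nat.find_spec hex
  have hmin : ∀ q : K[X], q.eval₂ f c = 0 → q.degree < p.degree → q = 0 := by
    intro q hq hqp
    by_contra hq0
    refine Nat.find_min hex (m := q.natDegree) ?_ ⟨q, hq0, hq, rfl⟩
    rw [← hpn]
    exact natDegree_lt_natDegree hq0 hqp
  have hmap : ∀ q : K[X], q.eval₂ f c = 0 → (q.map φ).eval₂ f c = 0 := by
    intro q hq
    rw [eval₂_map, ← hc, show f.comp φ = ψ.comp f from RingHom.ext fun a => (hf a).symm,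
      ← hom_eval₂, hq, map_zero]
  let I : Ideal K[X] := RingHom.ker (eval₂RingHom f c)
  have hI : ∀ q, q ∈ I ↔ q.eval₂ f c = 0 := fun q => Iff.rfl
  have htop : I.leadingCoeffNth p.natDegree = ⊤ := by
    refine (h.2 (I.leadingCoeffNth p.natDegree) fun x hx => ?_).resolve_left fun hbot => ?_
    · rw [Ideal.mem_leadingCoeffNth] at hx ⊢
      obtain ⟨q, hq, hqd, rfl⟩ := hx
      by_cases hz : φ q.leadingCoeff = 0
      · exact ⟨0, I.zero_mem, bot_le, by simp [hz]⟩
      · exact ⟨q.map φ, hmap q hq, degree_map_le.trans hqd,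
          leadingCoeff_map_of_leadingCoeff_ne_zero _ hz⟩
    · have : p.leadingCoeff ∈ I.leadingCoeffNth p.natDegree :=
        (Ideal.mem_leadingCoeffNth _ _ _).mpr ⟨p, hpc, degree_le_natDegree, rfl⟩
      rw [hbot] at this
      exact hp0 (leadingCoeff_eq_zero.mp this)
  obtain ⟨q, hq, hqd, hq1⟩ :=
    (Ideal.mem_leadingCoeffNth _ _ _).mp (htop ▸ Submodule.mem_top : (1 : K) ∈ _)
  have := h.nontrivial
  have hqm : q.Monic := hq1
  refine ⟨q, hqm, ?_, hq⟩
  rw [← sub_eq_zero]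
  refine hmin _ ?_ ?_
  · rw [eval₂_sub, hmap q hq, (hI q).mp hq, sub_zero]
  · have hlt : (q.map φ - q).degree < (q.map φ).degree :=
      degree_sub_lt_left (hqm.degree_map φ) (hqm.map φ).ne_zero
        (by simp [(hqm.map φ).leadingCoeff, hq1])
    refine hlt.trans_le (degree_map_le.trans (hqd.trans ?_))
    rw [degree_eq_natDegree hp0]

end DiffSimple

namespace PseudoField

variable {K T : Type*} [CommRing K] [CommRing T] {φ : K →+* K} {ψ : T →+* T}

theorem isArtinianRing (h : PseudoField K φ) : IsArtinianRing K := by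
  obtain ⟨hs, hn, hu⟩ := h
  have := hs.isReduced
  have := hs.nontrivial
  refine isArtinianRing_iff_krullDimLE_zero.mpr (Ring.KrullDimLE.mk₀ fun I hI => ?_)
  obtain ⟨M, hM, hIM⟩ := I.exists_le_maximal hI.ne_top
  have hfin := minimalPrimes.finite_of_isNoetherianRing K
  have hsub : (M : Set K) ⊆ ⋃ P ∈ (hfin.toFinset : Set (Ideal K)), (id P : Ideal K) := by
    intro x hx
    have hxz : x ∉ nonZeroDivisors K := fun hx' =>
      hM.ne_top (Ideal.eq_top_of_isUnit_mem _ hx (hu x hx'))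
    rw [mem_nonZeroDivisors_iff_right] at hxz
    push Not at hxz
    obtain ⟨y, hxy, hy⟩ := hxz
    have hy' : y ∉ sInf (minimalPrimes K) := by
      have : sInf (minimalPrimes K) = ⊥ := by
        have := Ideal.sInf_minimalPrimes (I := (⊥ : Ideal K))
        rw [show (⊥ : Ideal K).radical = ⊥ from (nilradical_eq_bot_iff.mpr ‹_›)] at this
        exact this
      rwa [this]
    simp only [Ideal.mem_sInf, not_forall] at hy'
    obtain ⟨P, hP, hyP⟩ := hy'
    have hxP : x ∈ P := (hP.1.1.mem_or_mem (hxy ▸ P.zero_mem : y * x ∈ P)).resolve_left hyP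
    exact Set.mem_biUnion (by simpa using hP) hxP
  obtain ⟨P, hP, hMP⟩ := (Ideal.subset_union_prime ⊥ ⊥
    (fun P hP _ _ => ((hfin.mem_toFinset.mp hP).1.1 : P.IsPrime))).mp hsub
  have hP' : P ∈ minimalPrimes K := hfin.mem_toFinset.mp hP
  have : M ≤ I := hMP.trans (hP'.2 ⟨hI, bot_le⟩ (hIM.trans hMP))
  exact le_antisymm hIM this ▸ hM

open Polynomial in
/-- In a `φ`-simple algebra of finite type over a `φ`-pseudo field `K`, every constant is a root
of a monic polynomial with coefficients constants of `K`. -/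
theorem exists_monic_of_fixed (h : PseudoField K φ) [Algebra K T] [Algebra.FiniteType K T]
    (hT : DiffSimple ψ) (hcomp : ∀ a : K, ψ (algebraMap K T a) = algebraMap K T (φ a))
    {c : T} (hc : ψ c = c) :
    ∃ p : K[X], p.Monic ∧ p.map φ = p ∧ p.eval₂ (algebraMap K T) c = 0 := by
  refine h.1.exists_monic_map_eq_self _ hcomp hc ?_
  by_contra! hne
  have := h.isArtinianRing
  have := h.1.nontrivial
  let f : K[X] →+* T := eval₂RingHom (algebraMap K T) c
  have hf : Function.Injective f := by
    rw [injective_iff_map_eq_zero]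
    exact fun p hp => by_contra fun h0 => hne p h0 hp
  obtain ⟨𝔭, h𝔭⟩ := Ideal.exists_maximal K
  have hprime : (𝔭.map (C : K →+* K[X])).IsPrime := by
    have := h𝔭.isPrime
    exact Ideal.isPrime_map_C_of_isPrime
  have hcomap : (𝔭.map (C : K →+* K[X])).comap C = 𝔭 := by
    refine (h𝔭.eq_of_le (Ideal.comap_ne_top _ hprime.ne_top) Ideal.le_comap_map).symm
  have hmin : 𝔭.map (C : K →+* K[X]) ∈ minimalPrimes K[X] := by
    refine ⟨⟨hprime, bot_le⟩, fun J hJ hle => ?_⟩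
    have := hJ.1
    have : J.comap C = 𝔭 :=
      (inferInstance : (J.comap C).IsMaximal).eq_of_le h𝔭.ne_top
        ((Ideal.comap_mono hle).trans hcomap.le)
    rw [Ideal.map_le_iff_le_comap, this]
  obtain ⟨P, hP, hPf⟩ := Ideal.exists_comap_eq_of_mem_minimalPrimes_of_injective hf _ hmin
  have hover : P.under K = 𝔭 := by
    rw [← hcomap, ← hPf, Ideal.comap_comap]
    ext a
    simp [f]
  have : P.LiesOver 𝔭 := ⟨hover.symm⟩
  let : Field (K ⧸ 𝔭) := Ideal.Quotient.field 𝔭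
  have htr : Transcendental (K ⧸ 𝔭) (Ideal.Quotient.mk P c) := by
    rw [transcendental_iff]
    intro p hp
    obtain ⟨p, rfl⟩ := map_surjective _ Ideal.Quotient.mk_surjective p
    have hmem : p ∈ P.comap f := by
      rw [Ideal.mem_comap, ← Ideal.Quotient.eq_zero_iff_mem, ← hp, aeval_def, eval₂_map]
      simp only [f, coe_eval₂RingHom]
      rw [hom_eval₂]
      rfl
    rw [hPf] at hmem
    ext n
    simpa [Ideal.Quotient.eq_zero_iff_mem] using Ideal.mem_map_C_iff.mp hmem n
  obtain ⟨N, hN, hNu⟩ := exists_pow_sub_one_not_isUnit htr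
  refine hNu ?_
  rw [← map_one (Ideal.Quotient.mk P), ← map_pow, ← map_sub]
  refine IsUnit.map _ (hT.isUnit_of_fixed (by simp [hc]) ?_)
  have := hne (X ^ N - 1) (X_pow_sub_C_ne_zero hN 1)
  simpa using this

end PseudoField

namespace PseudoDomain

variable {R : Type*} [CommRing R] {φ : R →+* R}

theorem nontrivial (h : PseudoDomain φ) : Nontrivial R := by
  obtain ⟨d, -, q, hq, -⟩ := h
  exact ⟨0, 1, fun h01 => hq.ne_top ((Ideal.eq_top_iff_one q).mpr (h01 ▸ q.zero_mem))⟩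

/-- A nonzero `φ`-ideal of a `φ`-pseudo domain contains a non-zero-divisor. -/
theorem exists_mem_nonZeroDivisors (h : PseudoDomain φ) {I : Ideal R}
    (hI : ∀ x ∈ I, φ x ∈ I) (h0 : I ≠ ⊥) : ∃ x ∈ I, x ∈ nonZeroDivisors R := by
  obtain ⟨d, hd, q, hq, hqd, hbot⟩ := h
  have hmem : ∀ x : R, x = 0 ↔ ∀ i < d, (φ ^ i) x ∈ q := by
    intro x
    rw [← Ideal.mem_bot, hbot]
    simp
  have hpow : ∀ (n : ℕ), ∀ x ∈ I, (φ ^ n) x ∈ I := by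
    intro n
    induction n with
    | zero => simp
    | succ n ih =>
      intro x hx
      rw [pow_succ']
      exact hI _ (ih x hx)
  obtain ⟨x, hxI, hx0⟩ := Submodule.exists_mem_ne_zero_of_ne_bot h0
  obtain ⟨i, -, hxi⟩ : ∃ i < d, (φ ^ i) x ∉ q := by
    simpa using (hmem x).not.mp hx0
  have hnot : ¬ ∃ j ∈ Finset.range d, I ≤ Ideal.comap (φ ^ j) q := by
    rintro ⟨j, hj, hle⟩
    rw [Finset.mem_range] at hj
    have h1 := hle (hpow (d - j + i) x hxI)
    change ((φ ^ j) * (φ ^ (d - j + i))) x ∈ q at h1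
    rw [← pow_add, show j + (d - j + i) = d + i by omega, pow_add] at h1
    exact hxi (hqd.le h1)
  have hsub := (Ideal.subset_union_prime 0 0
    (fun j _ _ _ => (Ideal.comap_isPrime (φ ^ j) q))).not.mpr hnot
  obtain ⟨y, hyI, hy⟩ := Set.not_subset.mp hsub
  refine ⟨y, hyI, mem_nonZeroDivisors_iff_right.mpr fun z hz => (hmem z).mpr fun j hj => ?_⟩
  have : (φ ^ j) z * (φ ^ j) y ∈ q := by
    rw [← map_mul, hz, map_zero]
    exact q.zero_mem
  refine (hq.mem_or_mem this).resolve_right fun hyq => hy ?_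
  exact Set.mem_biUnion (by simpa using hj) hyq

/-- The total quotient ring of a Noetherian `φ`-pseudo domain is a `φ`-pseudo field. -/
theorem pseudoField {Q : Type*} [CommRing Q] [Algebra R Q]
    [IsLocalization (nonZeroDivisors R) Q] [IsNoetherianRing R] (h : PseudoDomain φ)
    {Φ : Q →+* Q} (hΦ : ∀ r, Φ (algebraMap R Q r) = algebraMap R Q (φ r)) :
    PseudoField Q Φ := by
  have := h.nontrivial
  have hinj : Function.Injective (algebraMap R Q) := IsLocalization.injective Q le_rfl
  have : Nontrivial Q := hinj.nontrivial
  refine ⟨⟨bot_ne_top, fun I hI => or_iff_not_imp_left.mpr fun h0 => ?_⟩,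
    IsLocalization.isNoetherianRing (nonZeroDivisors R) Q ‹_›, fun x hx => ?_⟩
  · have hJ : I.comap (algebraMap R Q) ≠ ⊥ := by
      intro hJ
      refine h0 ?_
      rw [← IsLocalization.map_under (nonZeroDivisors R) Q I, Ideal.under, hJ, Ideal.map_bot]
    obtain ⟨r, hrI, hr⟩ := h.exists_mem_nonZeroDivisors (fun x hx => by
      rw [Ideal.mem_comap] at hx ⊢
      exact hΦ x ▸ hI _ hx) hJ
    exact Ideal.eq_top_of_isUnit_mem _ hrI (IsLocalization.map_units Q ⟨r, hr⟩)
  · obtain ⟨⟨r, s⟩, hrs⟩ := IsLocalization.surj (nonZeroDivisors R) x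
    have hr : r ∈ nonZeroDivisors R := by
      refine mem_nonZeroDivisors_iff_right.mpr fun z hz => hinj ?_
      have hs := (IsLocalization.map_units Q s).mem_nonZeroDivisors
      rw [map_zero]
      refine (mem_nonZeroDivisors_iff_right.mp (mul_mem hx hs)) _ ?_
      rw [hrs, ← map_mul, hz, map_zero]
    exact isUnit_of_mul_isUnit_left (hrs ▸ IsLocalization.map_units Q ⟨r, hr⟩)

end PseudoDomain

/-- Every proper `φ`-ideal is contained in a maximal proper `φ`-ideal, and the quotient by the
latter is `φ`-simple. -/
theorem exists_le_diffSimple_quotient {R : Type*} [CommRing R] (φ : R →+* R) {I : Ideal R}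
    (hI : ∀ x ∈ I, φ x ∈ I) (htop : I ≠ ⊤) :
    ∃ (m : Ideal R) (hm : m ≤ m.comap φ), I ≤ m ∧ m ≠ ⊤ ∧
      (∀ J : Ideal R, (∀ x ∈ J, φ x ∈ J) → m ≤ J → J ≠ ⊤ → J = m) ∧
      DiffSimple (Ideal.quotientMap m φ hm) := by
  obtain ⟨m, hIm, hmax⟩ := zorn_le_nonempty₀ {J : Ideal R | (∀ x ∈ J, φ x ∈ J) ∧ J ≠ ⊤}
    (fun c hc hch J₀ hJ₀ => by
      refine ⟨sSup c, ⟨fun x hx => ?_, ?_⟩, fun J hJ => le_sSup hJ⟩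
      · rw [Submodule.mem_sSup_of_directed ⟨J₀, hJ₀⟩ hch.directedOn] at hx
        obtain ⟨J, hJ, hxJ⟩ := hx
        exact le_sSup hJ ((hc hJ).1 x hxJ)
      · rw [Ideal.ne_top_iff_one, Submodule.mem_sSup_of_directed ⟨J₀, hJ₀⟩ hch.directedOn]
        rintro ⟨J, hJ, h1⟩
        exact (hc hJ).2 ((Ideal.eq_top_iff_one J).mpr h1)) I ⟨hI, htop⟩
  have huniq : ∀ J : Ideal R, (∀ x ∈ J, φ x ∈ J) → m ≤ J → J ≠ ⊤ → J = m :=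
    fun J hJ hle hJt => le_antisymm (hmax.2 ⟨hJ, hJt⟩ hle) hle
  refine ⟨m, fun x hx => hmax.1.1 x hx, hIm, hmax.1.2, huniq, ?_, fun J hJ => ?_⟩
  · have := Ideal.Quotient.nontrivial_iff.mpr hmax.1.2
    exact bot_ne_top
  · refine or_iff_not_imp_right.mpr fun hJt => ?_
    have := huniq (J.comap (Ideal.Quotient.mk m)) (fun x hx => ?_) (fun x hx => ?_)
      (Ideal.comap_ne_top _ hJt)
    · rw [← Ideal.map_comap_of_surjective _ Ideal.Quotient.mk_surjective J, this,
        Ideal.map_quotient_self]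
    · exact hJ _ hx
    · rw [Ideal.mem_comap, Ideal.Quotient.eq_zero_iff_mem.mpr hx]
      exact J.zero_mem

open TensorProduct in
/-- The ring homomorphism out of a tensor product induced by a pair of ring homomorphisms
agreeing on the base ring. -/
theorem exists_ringHom_tensorProduct {K A B C : Type*} [CommRing K] [CommRing A] [CommRing B]
    [CommRing C] [Algebra K A] [Algebra K B] (f : A →+* C) (g : B →+* C)
    (h : ∀ a : K, f (algebraMap K A a) = g (algebraMap K B a)) :
    ∃ F : A ⊗[K] B →+* C, (∀ a, F (a ⊗ₜ 1) = f a) ∧ ∀ b, F (1 ⊗ₜ b) = g b := by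
  let _ : Algebra K C := (f.comp (algebraMap K A)).toAlgebra
  let f' : A →ₐ[K] C := { f with commutes' := fun _ => rfl }
  let g' : B →ₐ[K] C := { g with commutes' := fun a => (h a).symm }
  refine ⟨(Algebra.TensorProduct.lift f' g' fun _ _ => Commute.all _ _).toRingHom, ?_, ?_⟩
  · intro a
    simp [f']
  · intro b
    simp [g']

open Polynomial in
/-- Let `α, β : R → B` be integral equivariant maps of difference rings with `α` injective. If the
kernel of `β` is a maximal `φ`-ideal, then `α` maps it into the zero divisors of `B`. -/
theorem notMem_nonZeroDivisors_of_mem_ker {R B : Type*} [CommRing R] [CommRing B] [Nontrivial B]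
    {φ : R →+* R} {ψ : B →+* B} {α β : R →+* B} (hα : ∀ r, ψ (α r) = α (φ r))
    (hβ : ∀ r, ψ (β r) = β (φ r)) (hαinj : Function.Injective α) (hαint : α.IsIntegral)
    (hβint : β.IsIntegral)
    (hmax : ∀ J : Ideal R, (∀ x ∈ J, φ x ∈ J) → RingHom.ker β ≤ J → J ≠ ⊤ → J = RingHom.ker β)
    {x : R} (hx : β x = 0) : α x ∉ nonZeroDivisors B := by
  intro hnz
  let M : Ideal B := (RingHom.ker β).map α
  have hM : M ≠ ⊤ := by
    rw [Ne, Ideal.map_eq_top_iff α hαinj hαint]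
    exact RingHom.ker_ne_top β
  have hMψ : M ≤ M.comap ψ := by
    rw [Ideal.map_le_iff_le_comap]
    intro r hr
    rw [Ideal.mem_comap, Ideal.mem_comap, hα]
    refine Ideal.mem_map_of_mem _ ?_
    rw [RingHom.mem_ker] at hr ⊢
    rw [← hβ, hr, map_zero]
  have hker : M.comap β = RingHom.ker β := by
    refine hmax _ (fun r hr => ?_) (fun r hr => ?_) (Ideal.comap_ne_top β hM)
    · rw [Ideal.mem_comap] at hr ⊢
      exact hβ r ▸ hMψ hr
    · rw [Ideal.mem_comap, RingHom.mem_ker.mp hr]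
      exact M.zero_mem
  have key : ∀ n : ℕ, ∀ p : R[X], p.Monic → p.natDegree = n → p.eval₂ β (α x) ≠ 0 := by
    intro n
    induction n with
    | zero =>
      intro p hp hn
      simp [hp.natDegree_eq_zero.mp hn]
    | succ n ih =>
      intro p hp hn h0
      have hxM : α x ∈ M := Ideal.mem_map_of_mem _ hx
      rw [← p.divX_mul_X_add, eval₂_add, eval₂_mul, eval₂_X, eval₂_C] at h0
      have hc : p.coeff 0 ∈ M.comap β := by
        rw [Ideal.mem_comap, eq_neg_of_add_eq_zero_right h0]
        exact M.neg_mem (M.mul_mem_left _ hxM)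
      rw [hker, RingHom.mem_ker] at hc
      rw [hc, add_zero] at h0
      have hdeg : p.divX.natDegree = n := by rw [natDegree_divX_eq_natDegree_tsub_one, hn]; rfl
      refine ih p.divX ?_ hdeg (mem_nonZeroDivisors_iff_right.mp hnz _ h0)
      rw [Monic, leadingCoeff, hdeg, coeff_divX, ← hn]
      exact hp
  obtain ⟨p, hp, hp0⟩ := hβint (α x)
  exact key _ p hp rfl hp0

/-- Elements of the subalgebra generated by the image of `α` and elements integral over the base
ring are integral over `α`. -/
theorem isIntegralElem_of_mem_adjoin {K R T : Type*} [CommRing K] [CommRing R] [CommRing T]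
    [Algebra K R] [Algebra K T] (α : R →ₐ[K] T) {E : Set T} (hE : ∀ e ∈ E, IsIntegral K e)
    {t : T} (ht : t ∈ Algebra.adjoin K (Set.range α ∪ E)) : α.toRingHom.IsIntegralElem t := by
  have hmap : α.toRingHom.comp (algebraMap K R) = algebraMap K T := α.comp_algebraMap
  induction ht using Algebra.adjoin_induction with
  | mem x hx =>
    obtain ⟨r, rfl⟩ | hx := hx
    · exact RingHom.isIntegralElem_map α.toRingHom
    · refine RingHom.isIntegralElem.of_comp (algebraMap K R) α.toRingHom ?_
      rw [hmap]
      exact hE x hx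
  | algebraMap a =>
    rw [← hmap]
    exact RingHom.isIntegralElem_map α.toRingHom
  | add x y _ _ hx hy => exact hx.add _ hy
  | mul x y _ _ hx hy => exact hx.mul _ hy

/-- Two equivariant maps out of an algebra generated by a fundamental solution matrix differ by
constants. -/
theorem range_le_adjoin_range_union_fixed {ι K R T : Type*} [Fintype ι] [DecidableEq ι]
    [CommRing K] [CommRing R] [CommRing T] [Algebra K R] [Algebra K T]
    {φ : R →+* R} {ψ : T →+* T} (α β : R →ₐ[K] T)
    (hα : ∀ r, ψ (α r) = α (φ r)) (hβ : ∀ r, ψ (β r) = β (φ r))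
    (A : Matrix ι ι K) (hA : IsUnit A.det) (Y : Matrix ι ι R)
    (hsol : Y.map φ = A.map (algebraMap K R) * Y)
    (w : R) (hw : Y.det * w = 1)
    (hgen : Algebra.adjoin K (insert w {x : R | ∃ i j, Y i j = x}) = ⊤) :
    Set.range β ⊆ Algebra.adjoin K (Set.range α ∪ {e | ψ e = e}) := by
  set B := Algebra.adjoin K (Set.range α ∪ {e | ψ e = e})
  have hαB : ∀ r, α r ∈ B := fun r => Algebra.subset_adjoin (Or.inl ⟨r, rfl⟩)
  have hEB : ∀ e, ψ e = e → e ∈ B := fun e he => Algebra.subset_adjoin (Or.inr he)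
  have hYdet : IsUnit Y.det := IsUnit.of_mul_eq_one _ hw
  have hdet : φ Y.det = algebraMap K R A.det * Y.det := by
    rw [RingHom.map_det, RingHom.mapMatrix_apply, hsol, Matrix.det_mul, RingHom.map_det,
      RingHom.mapMatrix_apply]
  have hφw : algebraMap K R A.det * φ w = w := by
    have h1 : algebraMap K R A.det * Y.det * φ w = 1 := by
      rw [← hdet, ← map_mul, hw, map_one]
    calc _ = (Y.det * w) * (algebraMap K R A.det * φ w) := by rw [hw, one_mul]
      _ = w * (algebraMap K R A.det * Y.det * φ w) := by ring
      _ = w := by rw [h1, mul_one]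
  have hsolT : ∀ γ : R →ₐ[K] T, (∀ r, ψ (γ r) = γ (φ r)) →
      (Y.map γ).map ψ = A.map (algebraMap K T) * Y.map γ := by
    intro γ hγ
    have : (Y.map γ).map ψ = (Y.map φ).map γ := by
      ext i j
      simp [hγ]
    rw [this, hsol, Matrix.map_mul]
    congr 1
    ext i j
    simp
  have hunit : IsUnit (A.map (algebraMap K T) * Y.map α) := by
    rw [Matrix.isUnit_iff_isUnit_det, Matrix.det_mul]
    refine IsUnit.mul ?_ ?_
    · have := hA.map (algebraMap K T)
      rwa [RingHom.map_det] at this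
    · have := hYdet.map α
      rwa [AlgHom.map_det] at this
  have hinv : Y.map α * (Y⁻¹).map α = 1 := by
    rw [← Matrix.map_mul, Matrix.mul_nonsing_inv _ hYdet, Matrix.map_one _ (map_zero α) (map_one α)]
  set Z : Matrix ι ι T := (Y⁻¹).map α * Y.map β with hZ
  have hYZ : Y.map β = Y.map α * Z := by
    rw [hZ, ← Matrix.mul_assoc, hinv, Matrix.one_mul]
  have hZfix : Z.map ψ = Z := by
    refine hunit.mul_left_cancel ?_
    rw [← hsolT α hα, ← Matrix.map_mul, ← hYZ, hsolT α hα, Matrix.mul_assoc, ← hYZ, hsolT β hβ]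
  have hbw : ψ (α Y.det * β w) = α Y.det * β w := by
    conv_rhs => rw [← hφw]
    rw [map_mul, hα, hβ, hdet, map_mul, map_mul, AlgHom.commutes, AlgHom.commutes]
    ring
  have hle : (⊤ : Subalgebra K R).map β ≤ B := by
    rw [← hgen, AlgHom.map_adjoin, Algebra.adjoin_le_iff]
    rintro _ ⟨y, rfl | ⟨i, j, rfl⟩, rfl⟩
    · have : β y = α y * (α Y.det * β y) := by
        rw [← mul_assoc, ← map_mul, mul_comm y, hw, map_one, one_mul]
      rw [this]
      exact mul_mem (hαB _) (hEB _ hbw)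
    · have : β (Y i j) = ∑ k, α (Y i k) * Z k j := by
        simpa [Matrix.mul_apply] using congrFun (congrFun hYZ i) j
      rw [this]
      exact sum_mem fun k _ => mul_mem (hαB _) (hEB _ (congrFun (congrFun hZfix k) j))
  rintro _ ⟨r, rfl⟩
  exact hle ⟨r, Algebra.mem_top, rfl⟩

/-- The constants of the total quotient ring of a `φ`-simple ring `R` lie in `R`. -/
theorem DiffSimple.exists_fixed_algebraMap_eq {R Q : Type*} [CommRing R] [CommRing Q]
    [Algebra R Q] [IsLocalization (nonZeroDivisors R) Q] {φ : R →+* R} {Φ : Q →+* Q}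
    (h : DiffSimple φ) (hΦ : ∀ r, Φ (algebraMap R Q r) = algebraMap R Q (φ r)) {x : Q}
    (hx : Φ x = x) : ∃ c : R, φ c = c ∧ algebraMap R Q c = x := by
  have := h.nontrivial
  have hinj : Function.Injective (algebraMap R Q) := IsLocalization.injective Q le_rfl
  let D : Ideal R :=
    (LinearMap.range (Algebra.linearMap R Q)).comap (LinearMap.toSpanSingleton R Q x)
  have hD : ∀ r, r ∈ D ↔ ∃ s, algebraMap R Q s = r • x := by
    intro r
    simp [D]
  have htop : D = ⊤ := by
    refine (h.2 D fun r hr => ?_).resolve_left fun h0 => ?_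
    · obtain ⟨s, hs⟩ := (hD r).mp hr
      refine (hD _).mpr ⟨φ s, ?_⟩
      rw [← hΦ, hs, Algebra.smul_def, map_mul, hΦ, hx, Algebra.smul_def]
    · obtain ⟨⟨s, r⟩, hrs⟩ := IsLocalization.surj (nonZeroDivisors R) x
      have hr : (r : R) ∈ D := (hD _).mpr ⟨s, by rw [Algebra.smul_def, mul_comm]; exact hrs.symm⟩
      rw [h0, Ideal.mem_bot] at hr
      exact zero_notMem_nonZeroDivisors (hr ▸ r.2)
  obtain ⟨c, hc⟩ := (hD 1).mp (htop ▸ Submodule.mem_top)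
  rw [one_smul] at hc
  exact ⟨c, hinj (by rw [← hΦ, hc, hx]), hc⟩

open TensorProduct in
/-- Over a reduced Artinian base, two difference algebras, the first with injective structure map
and the second nonzero, map to a common `φ`-simple difference algebra that is a quotient of their
tensor product. -/
theorem exists_diffSimple_compositum {K A B : Type*} [CommRing K] [IsArtinianRing K] [IsReduced K]
    [CommRing A] [CommRing B] [Nontrivial B] [Algebra K A] [Algebra K B]
    (hA : Function.Injective (algebraMap K A)) {φ : K →+* K} {φA : A →+* A} {φB : B →+* B}
    (hφA : ∀ a, φA (algebraMap K A a) = algebraMap K A (φ a))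
    (hφB : ∀ a, φB (algebraMap K B a) = algebraMap K B (φ a)) :
    ∃ (I : Ideal (A ⊗[K] B)) (ψ : (A ⊗[K] B) ⧸ I →+* (A ⊗[K] B) ⧸ I), DiffSimple ψ ∧
      (∀ a, ψ (Ideal.Quotient.mk I (a ⊗ₜ 1)) = Ideal.Quotient.mk I (φA a ⊗ₜ 1)) ∧
      ∀ b, ψ (Ideal.Quotient.mk I (1 ⊗ₜ b)) = Ideal.Quotient.mk I (1 ⊗ₜ φB b) := by
  have : IsSemisimpleRing K := IsArtinianRing.isSemisimpleRing_of_isReduced K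
  have : Module.Projective K B := Module.projective_of_isSemisimpleRing K B
  have : Nontrivial (A ⊗[K] B) :=
    (Algebra.TensorProduct.includeRight_injective (R := K) (A := A) (B := B) hA).nontrivial
  obtain ⟨F, hF1, hF2⟩ := exists_ringHom_tensorProduct (K := K)
    ((Algebra.TensorProduct.includeLeftRingHom (R := K) (A := A) (B := B)).comp φA)
    ((Algebra.TensorProduct.includeRight (R := K) (A := A) (B := B)).toRingHom.comp φB) (by
      intro a
      simp [hφA, hφB, Algebra.TensorProduct.tmul_one_eq_one_tmul])
  obtain ⟨I, hI, -, -, -, hs⟩ := exists_le_diffSimple_quotient F (I := ⊥)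
    (fun x hx => by rw [Ideal.mem_bot] at hx ⊢; rw [hx, map_zero]) bot_ne_top
  refine ⟨I, Ideal.quotientMap I F hI, hs, fun a => ?_, fun b => ?_⟩
  · rw [Ideal.quotientMap_mk, hF1]
    rfl
  · rw [Ideal.quotientMap_mk, hF2]
    rfl

open Polynomial in
/-- A root of a monic polynomial whose coefficients are integral over `K` is integral over `K`. -/
theorem isIntegral_of_monic_of_coeff {K Q T : Type*} [CommRing K] [CommRing Q] [CommRing T]
    [Algebra K Q] [Algebra K T] (f : Q →ₐ[K] T) {p : Q[X]} (hp : p.Monic)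
    (hcoeff : ∀ n, IsIntegral K (p.coeff n)) {t : T} (ht : p.eval₂ f.toRingHom t = 0) :
    IsIntegral K t := by
  let _ : Algebra Q T := f.toRingHom.toAlgebra
  have : IsScalarTower K Q T := .of_algebraMap_eq fun a => (f.commutes a).symm
  have hlift : p ∈ lifts (algebraMap (integralClosure K Q) Q) := by
    rw [lifts_iff_coeff_lifts]
    exact fun n => ⟨⟨p.coeff n, hcoeff n⟩, rfl⟩
  obtain ⟨q, hqp, -, hq⟩ := lifts_and_natDegree_eq_and_monic hlift hp
  refine isIntegral_trans (A := integralClosure K Q) t ⟨q, hq, ?_⟩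
  rw [IsScalarTower.algebraMap_eq (integralClosure K Q) Q T, ← eval₂_map, hqp]
  exact ht

open TensorProduct in
/-- If the constants of the total quotient ring of `R = K[Y, 1 / det Y]` are integral over the
`φ`-pseudo field `K`, then `R` is `φ`-simple. -/
theorem diffSimple_of_fixed_isIntegral {n : ℕ} {K R Q : Type*} [CommRing K] [CommRing R]
    [CommRing Q] [Algebra K R] [Algebra K Q] [Algebra R Q] [IsScalarTower K R Q]
    [Algebra.FiniteType K R] [IsLocalization (nonZeroDivisors R) Q]
    {φ : K →+* K} (hPF : PseudoField K φ) {φR : R →+* R} {Φ : Q →+* Q}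
    (hcomp : ∀ a : K, φR (algebraMap K R a) = algebraMap K R (φ a)) (hdom : PseudoDomain φR)
    (A : Matrix (Fin n) (Fin n) K) (hA : IsUnit A.det) (Y : Matrix (Fin n) (Fin n) R)
    (hsol : Y.map φR = A.map (algebraMap K R) * Y) (w : R) (hw : Y.det * w = 1)
    (hgen : Algebra.adjoin K (insert w {x : R | ∃ i j, Y i j = x}) = ⊤)
    (hΦ : ∀ r, Φ (algebraMap R Q r) = algebraMap R Q (φR r))
    (hint : ∀ x : Q, Φ x = x → IsIntegral K x) : DiffSimple φR := by
  have := hPF.isArtinianRing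
  have := hPF.1.isReduced
  have := hdom.nontrivial
  have : IsNoetherianRing R := Algebra.FiniteType.isNoetherianRing K R
  have hQ : PseudoField Q Φ := hdom.pseudoField hΦ
  have := hQ.1.nontrivial
  have hRQ : Function.Injective (algebraMap R Q) := IsLocalization.injective Q le_rfl
  have hΦK : ∀ a : K, Φ (algebraMap K Q a) = algebraMap K Q (φ a) := by
    intro a
    rw [IsScalarTower.algebraMap_apply K R Q, hΦ, hcomp, ← IsScalarTower.algebraMap_apply]
  refine ⟨bot_ne_top, fun I hI => or_iff_not_imp_right.mpr fun hItop => ?_⟩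
  obtain ⟨m, hm, hIm, hmtop, hmax, -⟩ := exists_le_diffSimple_quotient φR hI hItop
  have := Ideal.Quotient.nontrivial_iff.mpr hmtop
  by_contra hI0
  obtain ⟨x, hxI, hx⟩ := hdom.exists_mem_nonZeroDivisors hI hI0
  obtain ⟨N, ψ, hψ, hψQ, hψS⟩ := exists_diffSimple_compositum (K := K) (A := Q) (B := R ⧸ m)
    (hPF.1.injective_of_equivariant (algebraMap K Q) hΦK) (φA := Φ)
    (φB := Ideal.quotientMap m φR hm) hΦK (fun a => by
      rw [← Ideal.Quotient.mk_algebraMap, Ideal.quotientMap_mk, hcomp,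
        Ideal.Quotient.mk_algebraMap])
  have := hψ.nontrivial
  let T := (Q ⊗[K] (R ⧸ m)) ⧸ N
  let ι : Q →ₐ[K] T := (Ideal.Quotient.mkₐ K N).comp Algebra.TensorProduct.includeLeft
  let α : R →ₐ[K] T := ι.comp (IsScalarTower.toAlgHom K R Q)
  let β : R →ₐ[K] T := ((Ideal.Quotient.mkₐ K N).comp Algebra.TensorProduct.includeRight).comp
    (Ideal.Quotient.mkₐ K m)
  have hι : ∀ q, ψ (ι q) = ι (Φ q) := hψQ
  have hα : ∀ r, ψ (α r) = α (φR r) := fun r => (hι _).trans (congrArg ι (hΦ r))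
  have hβ : ∀ r, ψ (β r) = β (φR r) := fun r => hψS _
  have hαinj : Function.Injective α :=
    (hQ.1.injective_of_equivariant ι.toRingHom hι).comp hRQ
  have hE : ∀ e ∈ {e | ψ e = e}, IsIntegral K e := by
    intro e he
    obtain ⟨p, hp, hpΦ, hpe⟩ := hQ.exists_monic_of_fixed (T := T) hψ hψQ he
    refine isIntegral_of_monic_of_coeff ι hp (fun k => hint _ ?_) hpe
    rw [← Polynomial.coeff_map, hpΦ]
  set B := Algebra.adjoin K (Set.range α ∪ {e | ψ e = e})
  have hBβ : B = Algebra.adjoin K (Set.range β ∪ {e | ψ e = e}) := by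
    refine le_antisymm (Algebra.adjoin_le (Set.union_subset ?_ fun e he =>
      Algebra.subset_adjoin (Or.inr he))) (Algebra.adjoin_le (Set.union_subset ?_ fun e he =>
      Algebra.subset_adjoin (Or.inr he)))
    · exact range_le_adjoin_range_union_fixed β α hβ hα A hA Y hsol w hw hgen
    · exact range_le_adjoin_range_union_fixed α β hα hβ A hA Y hsol w hw hgen
  have hαB : ∀ r, α r ∈ B := fun r => Algebra.subset_adjoin (Or.inl ⟨r, rfl⟩)
  have hβB : ∀ r, β r ∈ B := fun r => hBβ ▸ Algebra.subset_adjoin (Or.inl ⟨r, rfl⟩)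
  have hψB : ∀ t ∈ B, ψ t ∈ B := by
    intro t ht
    induction ht using Algebra.adjoin_induction with
    | mem t ht =>
      obtain ⟨r, rfl⟩ | ht := ht
      · exact hα r ▸ hαB _
      · rw [show ψ t = t from ht]
        exact Algebra.subset_adjoin (Or.inr ht)
    | algebraMap a =>
      rw [← α.commutes, hα]
      exact hαB _
    | add s t _ _ hs ht => exact map_add ψ s t ▸ add_mem hs ht
    | mul s t _ _ hs ht => exact map_mul ψ s t ▸ mul_mem hs ht
  let ψB : B →+* B := (ψ.comp B.val.toRingHom).codRestrict B fun t => hψB t t.2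
  let αB : R →+* B := α.toRingHom.codRestrict B hαB
  let βB : R →+* B := β.toRingHom.codRestrict B hβB
  have hintB : ∀ {γ : R →+* B}, (∀ t : B, (B.val.toRingHom.comp γ).IsIntegralElem (t : T)) →
      γ.IsIntegral := by
    intro γ h t
    obtain ⟨p, hp, hpt⟩ := h t
    refine ⟨p, hp, Subtype.val_injective ?_⟩
    change B.val.toRingHom (p.eval₂ γ t) = _
    rw [Polynomial.hom_eval₂]
    exact hpt
  have hker : RingHom.ker βB = m := by
    refine hmax _ (fun r hr => ?_) (fun r hr => ?_) (RingHom.ker_ne_top βB)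
    · rw [RingHom.mem_ker] at hr ⊢
      have hr' : β r = 0 := congrArg Subtype.val hr
      exact Subtype.ext ((hβ r).symm.trans (by rw [hr', map_zero]; rfl))
    · rw [RingHom.mem_ker]
      refine Subtype.ext ?_
      change Ideal.Quotient.mk N (1 ⊗ₜ Ideal.Quotient.mk m r) = 0
      rw [Ideal.Quotient.eq_zero_iff_mem.mpr hr, TensorProduct.tmul_zero, map_zero]
  refine notMem_nonZeroDivisors_of_mem_ker (φ := φR) (ψ := ψB) (α := αB) (β := βB)
    (fun r => Subtype.ext (hα r)) (fun r => Subtype.ext (hβ r))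
    (fun r s hrs => hαinj (congrArg Subtype.val hrs))
    (hintB fun t => isIntegralElem_of_mem_adjoin α hE t.2)
    (hintB fun t => isIntegralElem_of_mem_adjoin β hE (hBβ ▸ t.2))
    (hker.symm ▸ hmax) (x := x) (RingHom.mem_ker.mp (hker.ge (hIm hxI))) ?_
  have hu : IsUnit (α x) := (IsLocalization.map_units Q ⟨x, hx⟩).map ι
  refine mem_nonZeroDivisors_iff_right.mpr fun t ht => Subtype.ext ?_
  exact hu.mul_left_eq_zero.mp (congrArg Subtype.val ht)

/-- Let `K` be a `φ`-pseudo field, `A ∈ GLₙ(K)`, and `R = K[Y, 1/det Y]` a `K`-`φ`-algebra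
that is a `φ`-pseudo domain, where `Y` is a fundamental solution matrix of `φ(y) = Ay`.
Let `Q` be the total quotient ring of `R` with endomorphism `Φ` extending `φ_R`.
Then `R` is `φ`-simple if and only if every `Φ`-constant of `Q` is algebraic over `K^φ`. -/
theorem diffSimple_iff_constants_algebraic
    {n : ℕ} {K R Q : Type*} [CommRing K] [CommRing R] [Algebra K R]
    [CommRing Q] [Algebra R Q] [IsLocalization (nonZeroDivisors R) Q]
    (φ : K →+* K) (hPF : PseudoField K φ)
    (A : Matrix (Fin n) (Fin n) K) (hA : IsUnit A.det)
    (φR : R →+* R) (hcomp : ∀ a : K, φR (algebraMap K R a) = algebraMap K R (φ a))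
    (hdom : PseudoDomain φR)
    (Y : Matrix (Fin n) (Fin n) R) (hY : IsUnit Y.det)
    (hsol : Y.map ⇑φR = A.map ⇑(algebraMap K R) * Y)
    (w : R) (hw : Y.det * w = 1)
    (hgen : Algebra.adjoin K (insert w {x : R | ∃ i j, Y i j = x}) = ⊤)
    (Φ : Q →+* Q) (hΦ : Φ.comp (algebraMap R Q) = (algebraMap R Q).comp φR) :
    DiffSimple φR ↔
      ∀ x : Q, Φ x = x → ∃ p : Polynomial Q, p ≠ 0 ∧
        (∀ m : ℕ, ∃ a : K, φ a = a ∧ algebraMap R Q (algebraMap K R a) = p.coeff m) ∧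
        Polynomial.eval x p = 0 := by
  have hΦ' : ∀ r, Φ (algebraMap R Q r) = algebraMap R Q (φR r) := RingHom.congr_fun hΦ
  have : Algebra.FiniteType K R := by
    refine ⟨Subalgebra.fg_def.mpr ⟨_, Set.Finite.insert w ?_, hgen⟩⟩
    refine (Set.finite_range fun ij : Fin n × Fin n => Y ij.1 ij.2).subset ?_
    rintro _ ⟨i, j, rfl⟩
    exact ⟨(i, j), rfl⟩
  have := hdom.nontrivial
  have hRQ : Function.Injective (algebraMap R Q) := IsLocalization.injective Q le_rfl
  have := hRQ.nontrivial
  constructor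
  · intro hR x hx
    obtain ⟨c, hc, rfl⟩ := hR.exists_fixed_algebraMap_eq hΦ' hx
    obtain ⟨p, hp, hpφ, hpc⟩ := hPF.exists_monic_of_fixed hR hcomp hc
    refine ⟨p.map ((algebraMap R Q).comp (algebraMap K R)), (hp.map _).ne_zero,
      fun k => ⟨p.coeff k, ?_, ?_⟩, ?_⟩
    · rw [← Polynomial.coeff_map, hpφ]
    · rw [Polynomial.coeff_map, RingHom.comp_apply]
    · rw [Polynomial.eval_map, ← Polynomial.hom_eval₂, hpc, map_zero]
  · intro h
    let _ : Algebra K Q := ((algebraMap R Q).comp (algebraMap K R)).toAlgebra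
    have : IsScalarTower K R Q := .of_algebraMap_eq fun _ => rfl
    refine diffSimple_of_fixed_isIntegral hPF hcomp hdom A hA Y hsol w hw hgen hΦ' fun x hx => ?_
    obtain ⟨p, hp0, hp, hpx⟩ := h x hx
    choose a ha hap using hp
    obtain ⟨b, hb⟩ : IsUnit (a p.natDegree) := by
      refine hPF.1.isUnit_of_fixed (ha _) fun h0 => hp0 ?_
      rw [← Polynomial.leadingCoeff_eq_zero, Polynomial.leadingCoeff, ← hap, h0, map_zero, map_zero]
    let u : K := ((b⁻¹ : Kˣ) : K)
    have hmonic : (Polynomial.C (algebraMap K Q u) * p).Monic := by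
      refine Polynomial.monic_C_mul_of_mul_leadingCoeff_eq_one ?_
      rw [Polynomial.leadingCoeff, ← hap, ← IsScalarTower.algebraMap_apply, ← map_mul, ← hb,
        Units.inv_mul, map_one]
    have hlift : p ∈ Polynomial.lifts (algebraMap K Q) :=
      (Polynomial.lifts_iff_coeff_lifts p).mpr fun k => ⟨a k, hap k⟩
    obtain ⟨q, hqp, -, hq⟩ := Polynomial.lifts_and_natDegree_eq_and_monic
      (Polynomial.base_mul_mem_lifts u hlift) hmonic
    refine ⟨q, hq, ?_⟩
    rw [← Polynomial.eval_map, hqp, Polynomial.eval_mul, hpx, mul_zero]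
end

section
/- Let K be a field equipped with two commuting ring endomorphisms φ and σ such that: (i) every a ∈ K satisfying φ^m(a) = a for some m ≥ 1 already satisfies φ(a) = a (i.e., K^{φ^∞} = K^φ); and (ii) σ maps the subfield K^φ = {a ∈ K | φ(a) = a} onto itself. Let A ∈ GL_n(K). Then there exists a σ-PV ring R for φ(y) = A y such that every Φ-constant of R is algebraic over K^φ: there is a commutative K-algebra R with commuting ring endomorphisms Φ and Σ satisfying Φ(algebraMap a) = algebraMap(φ(a)) and Σ(algebraMap a) = algebraMap(σ(a)) for all a ∈ K, a matrix Y ∈ GL_n(R) with Φ applied entrywise to Y equal to (algebraMap applied entrywise to A) · Y, such that R is generated as a K-algebra by the entries of Σ^i(Y) together with (det Σ^i(Y))^{-1} for all i ≥ 0, R is Φ-simple, R is a Φ-pseudo domain, and every r ∈ R with Φ(r) = r is a root of a nonzero polynomial with coefficients in the image of K^φ. -/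
/-- An ideal `m` is maximal among the proper `f`-stable ideals. -/
def FMax {B : Type*} [CommRing B] (f : B →+* B) (m : Ideal B) : Prop :=
  m ≠ ⊤ ∧ (∀ x ∈ m, f x ∈ m) ∧
    ∀ I : Ideal B, m ≤ I → (∀ x ∈ I, f x ∈ I) → I = m ∨ I = ⊤

/-- A prime ideal above `m` that is fixed by pullback along a positive power of `f`. -/
def PeriodicPrime {B : Type*} [CommRing B] (f : B →+* B) (m Q : Ideal B) : Prop :=
  Q.IsPrime ∧ m ≤ Q ∧ ∃ D : ℕ, 1 ≤ D ∧ Q.comap (f ^ D) = Q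

section Abstract

variable {B B' : Type*} [CommRing B] [CommRing B']

lemma comap_pow_add (f : B →+* B) (a b : ℕ) (p : Ideal B) :
    p.comap (f ^ (a + b)) = (p.comap (f ^ a)).comap (f ^ b) := by
  rw [pow_add, RingHom.mul_def, Ideal.comap_comap]

lemma comap_pow_zero (f : B →+* B) (p : Ideal B) : p.comap (f ^ 0) = p := by
  rw [pow_zero]; exact Ideal.comap_id p

lemma comap_pow_mul_eq {f : B →+* B} {D : ℕ} {p : Ideal B} (h : p.comap (f ^ D) = p) (k : ℕ) :
    p.comap (f ^ (k * D)) = p := by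
  induction k with
  | zero => rw [Nat.zero_mul, comap_pow_zero]
  | succ k ih => rw [Nat.succ_mul, comap_pow_add, ih, h]

lemma comap_pow_mul_le {f : B →+* B} {c : ℕ} {p : Ideal B} (h : p.comap (f ^ c) ≤ p) (k : ℕ) :
    p.comap (f ^ ((k + 1) * c)) ≤ p.comap (f ^ c) := by
  induction k with
  | zero => rw [Nat.zero_add, Nat.one_mul]
  | succ k ih =>
    rw [Nat.succ_mul, comap_pow_add]
    exact Ideal.comap_mono (ih.trans h)

lemma pow_comp_comm {f : B →+* B} {f' : B' →+* B'} {h : B →+* B'}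
    (hc : h.comp f = f'.comp h) (k : ℕ) : h.comp (f ^ k) = (f' ^ k).comp h := by
  induction k with
  | zero => rfl
  | succ k ih =>
    rw [pow_succ, pow_succ, RingHom.mul_def, RingHom.mul_def, ← RingHom.comp_assoc, ih,
      RingHom.comp_assoc, hc, ← RingHom.comp_assoc]

lemma comap_comap_pow {f : B →+* B} {f' : B' →+* B'} {h : B →+* B'}
    (hc : h.comp f = f'.comp h) (k : ℕ) (Q : Ideal B') :
    (Q.comap (f' ^ k)).comap h = (Q.comap h).comap (f ^ k) := by
  rw [Ideal.comap_comap, Ideal.comap_comap, pow_comp_comm hc]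

lemma exists_fMax_ge (f : B →+* B) (I : Ideal B) (hI : I ≠ ⊤) (hf : ∀ x ∈ I, f x ∈ I) :
    ∃ m, I ≤ m ∧ FMax f m := by
  obtain ⟨m, hIm, hm⟩ := zorn_le_nonempty₀ {J : Ideal B | J ≠ ⊤ ∧ ∀ x ∈ J, f x ∈ J} (by
    intro c hc hchain y hy
    refine ⟨sSup c, ⟨?_, ?_⟩, fun z hz => le_sSup hz⟩
    · rw [Ideal.ne_top_iff_one, Submodule.mem_sSup_of_directed ⟨y, hy⟩ hchain.directedOn]
      rintro ⟨J, hJ, h1⟩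
      exact (Ideal.ne_top_iff_one J).1 (hc hJ).1 h1
    · intro x hx
      rw [Submodule.mem_sSup_of_directed ⟨y, hy⟩ hchain.directedOn] at hx ⊢
      obtain ⟨J, hJ, hxJ⟩ := hx
      exact ⟨J, hJ, (hc hJ).2 x hxJ⟩) I ⟨hI, hf⟩
  refine ⟨m, hIm, hm.prop.1, hm.prop.2, fun J hmJ hJ => ?_⟩
  by_cases h : J = ⊤
  · exact Or.inr h
  · exact Or.inl (hm.eq_of_ge ⟨h, hJ⟩ hmJ)

/-- The pullback of a proper stable ideal containing the image of an `f`-maximal ideal. -/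
lemma FMax.comap_eq {f : B →+* B} {f' : B' →+* B'} {h : B →+* B'} {m : Ideal B} (hm : FMax f m)
    (hc : h.comp f = f'.comp h) {I : Ideal B'} (hI : I ≠ ⊤) (hfI : ∀ x ∈ I, f' x ∈ I)
    (hle : m ≤ I.comap h) : I.comap h = m := by
  rcases hm.2.2 (I.comap h) hle (fun x hx => by
    rw [Ideal.mem_comap] at hx ⊢
    have := RingHom.congr_fun hc x
    simp only [RingHom.comp_apply] at this
    rw [this]; exact hfI _ hx) with h1 | h1
  · exact h1
  · exact absurd (Ideal.comap_eq_top_iff.1 h1) hI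

lemma FMax.comap_self {f : B →+* B} {m : Ideal B} (hm : FMax f m) : m.comap f = m :=
  hm.comap_eq rfl hm.1 hm.2.1 hm.2.1

lemma FMax.comap_pow_self {f : B →+* B} {m : Ideal B} (hm : FMax f m) (k : ℕ) :
    m.comap (f ^ k) = m := by
  have h : m.comap (f ^ 1) = m := by rw [pow_one]; exact hm.comap_self
  simpa using comap_pow_mul_eq h k

lemma FMax.mem_of_forall {f : B →+* B} {m p : Ideal B} (hm : FMax f m) (hp : p ≠ ⊤) (hle : m ≤ p)
    {x : B} (hx : ∀ j, (f ^ j) x ∈ p) : x ∈ m := by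
  let I : Ideal B := ⨅ j : ℕ, p.comap (f ^ j)
  have hmem : ∀ y, y ∈ I ↔ ∀ j, (f ^ j) y ∈ p := fun y => by
    simp only [I, Submodule.mem_iInf, Ideal.mem_comap]
  rcases hm.2.2 I (fun y hy => (hmem y).2 fun j => hle (by
      have := hm.comap_pow_self j
      rw [← this] at hy; exact hy)) (fun y hy => (hmem _).2 fun j => by
      have := (hmem y).1 hy (j + 1)
      rwa [pow_succ] at this) with h | h
  · rw [← h]; exact (hmem x).2 hx
  · exfalso
    apply hp
    rw [Ideal.eq_top_iff_one]
    have : (1 : B) ∈ I := h ▸ Submodule.mem_top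
    simpa using (hmem 1).1 this 0

lemma FMax.iInf_comap_le {f : B →+* B} {m p : Ideal B} (hm : FMax f m) (hp : p ≠ ⊤) (hle : m ≤ p)
    {D : ℕ} (hD : 1 ≤ D) (hper : p.comap (f ^ D) = p) :
    (⨅ j ∈ Finset.range D, p.comap (f ^ j)) ≤ m := by
  intro x hx
  simp only [Submodule.mem_iInf, Ideal.mem_comap, Finset.mem_range] at hx
  refine hm.mem_of_forall hp hle fun j => ?_
  have h1 := hx (j % D) (Nat.mod_lt _ hD)
  have h2 := comap_pow_mul_eq hper (j / D)
  have h3 : p.comap (f ^ j) = p.comap (f ^ (j % D)) := by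
    conv_lhs => rw [← Nat.div_add_mod' j D, comap_pow_add, h2]
  rw [← Ideal.mem_comap, h3]; exact h1

lemma PeriodicPrime.comap_pow {f : B →+* B} {m p : Ideal B} (hm : FMax f m)
    (hp : PeriodicPrime f m p) (j : ℕ) : PeriodicPrime f m (p.comap (f ^ j)) := by
  obtain ⟨h1, h2, D, h3, h4⟩ := hp
  refine ⟨Ideal.IsPrime.comap _, ?_, D, h3, ?_⟩
  · rw [← hm.comap_pow_self j]; exact Ideal.comap_mono h2
  · rw [← comap_pow_add, add_comm, comap_pow_add, h4]

lemma PeriodicPrime.comap {f : B →+* B} {f' : B' →+* B'} {h : B →+* B'} {m : Ideal B}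
    {m' Q : Ideal B'} (hc : h.comp f = f'.comp h) (hle : m ≤ m'.comap h)
    (hQ : PeriodicPrime f' m' Q) : PeriodicPrime f m (Q.comap h) := by
  obtain ⟨h1, h2, D, h3, h4⟩ := hQ
  refine ⟨Ideal.IsPrime.comap _, hle.trans (Ideal.comap_mono h2), D, h3, ?_⟩
  rw [← comap_comap_pow hc, h4]

lemma PeriodicPrime.exists_comap_le {f : B →+* B} {m p Q : Ideal B} (hm : FMax f m)
    (hp : PeriodicPrime f m p) (hQ : Q.IsPrime) (hle : m ≤ Q) : ∃ j, p.comap (f ^ j) ≤ Q := by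
  obtain ⟨h1, h2, D, h3, h4⟩ := hp
  have h := (hm.iInf_comap_le h1.ne_top h2 h3 h4).trans hle
  rw [← Finset.inf_eq_iInf, hQ.inf_le'] at h
  obtain ⟨j, -, hj⟩ := h
  exact ⟨j, hj⟩

lemma PeriodicPrime.eq_of_comap_le {f : B →+* B} {m p : Ideal B}
    (hp : PeriodicPrime f m p) {c : ℕ} (h : p.comap (f ^ c) ≤ p) : p.comap (f ^ c) = p := by
  obtain ⟨h1, h2, D, h3, h4⟩ := hp
  refine le_antisymm h ?_
  have := comap_pow_mul_le h (D - 1)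
  rw [Nat.sub_add_cancel h3, mul_comm, comap_pow_mul_eq h4] at this
  exact this

lemma PeriodicPrime.exists_eq_comap {f : B →+* B} {m p p' : Ideal B} (hm : FMax f m)
    (hp : PeriodicPrime f m p) (hp' : PeriodicPrime f m p') : ∃ j, p' = p.comap (f ^ j) := by
  obtain ⟨j, hj⟩ := hp.exists_comap_le hm hp'.1 hp'.2.1
  obtain ⟨l, hl⟩ := hp'.exists_comap_le hm hp.1 hp.2.1
  have h1 : p'.comap (f ^ (l + j)) ≤ p.comap (f ^ j) := by
    rw [comap_pow_add]; exact Ideal.comap_mono hl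
  have h2 := hp'.eq_of_comap_le (h1.trans hj)
  exact ⟨j, le_antisymm (h2 ▸ h1) hj⟩

lemma PeriodicPrime.eq_of_le {f : B →+* B} {m p p' : Ideal B} (hm : FMax f m)
    (hp : PeriodicPrime f m p) (hp' : PeriodicPrime f m p') (hle : p ≤ p') : p = p' := by
  obtain ⟨j, rfl⟩ := hp'.exists_eq_comap hm hp
  exact hp'.eq_of_comap_le hle

lemma PeriodicPrime.comap_pow_eq {f : B →+* B} {m p p' : Ideal B} (hm : FMax f m)
    (hp : PeriodicPrime f m p) (hp' : PeriodicPrime f m p') {D : ℕ} (hD : p.comap (f ^ D) = p) :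
    p'.comap (f ^ D) = p' := by
  obtain ⟨j, rfl⟩ := hp.exists_eq_comap hm hp'
  rw [← comap_pow_add, add_comm, comap_pow_add, hD]

lemma FMax.exists_periodicPrime [IsNoetherianRing B] {f : B →+* B} {m : Ideal B}
    (hm : FMax f m) : ∃ p ∈ m.minimalPrimes, PeriodicPrime f m p := by
  have hs : ∀ p : m.minimalPrimes, ∃ q : m.minimalPrimes, (q : Ideal B).comap f = p := by
    rintro ⟨p, hp⟩
    obtain ⟨q, hq, h⟩ := Ideal.exists_minimalPrimes_comap_eq (I := m) f p
      (by rw [hm.comap_self]; exact hp)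
    exact ⟨⟨q, hq⟩, h⟩
  choose s hs using hs
  have hfin : Finite m.minimalPrimes := (Ideal.finite_minimalPrimes_of_isNoetherianRing B m)
  obtain ⟨p0, hp0⟩ := Ideal.nonempty_minimalPrimes hm.1
  have hiter : ∀ (k : ℕ) (p : m.minimalPrimes), ((s^[k] p : _) : Ideal B).comap (f ^ k) = p := by
    intro k
    induction k with
    | zero => intro p; exact comap_pow_zero f _
    | succ k ih =>
      intro p
      rw [Function.iterate_succ_apply', add_comm, comap_pow_add, pow_one, hs, ih]
  obtain ⟨a, b, hab, heq⟩ := Finite.exists_ne_map_eq_of_infinite (fun k : ℕ => s^[k] ⟨p0, hp0⟩)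
  wlog hlt : a < b generalizing a b
  · exact this b a hab.symm heq.symm (lt_of_le_of_ne (not_lt.1 hlt) hab.symm)
  refine ⟨s^[a] ⟨p0, hp0⟩, Subtype.prop _, (Subtype.prop (s^[a] ⟨p0, hp0⟩)).isPrime,
    (Subtype.prop (s^[a] ⟨p0, hp0⟩)).le, b - a, by omega, ?_⟩
  have h := hiter (b - a) (s^[a] ⟨p0, hp0⟩)
  rw [← Function.iterate_add_apply, Nat.sub_add_cancel hlt.le, ← heq] at h
  exact h

/-- Two primes with the same pullback are the kernels of compatible maps to a common field. -/
lemma exists_field_of_comap_eq {A B C : Type u} [CommRing A] [CommRing B] [CommRing C]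
    (b : A →+* B) (c : A →+* C) (P : Ideal B) (Q : Ideal C) [P.IsPrime] [Q.IsPrime]
    (h : P.comap b = Q.comap c) :
    ∃ (Ω : Type u) (_ : Field Ω) (β : B →+* Ω) (γ : C →+* Ω),
      β.comp b = γ.comp c ∧ RingHom.ker β = P ∧ RingHom.ker γ = Q := by
  let p := P.comap b
  have : p.IsPrime := Ideal.IsPrime.comap b
  let i : p.ResidueField →+* P.ResidueField := Ideal.ResidueField.map p P b rfl
  let j : p.ResidueField →+* Q.ResidueField := Ideal.ResidueField.map p Q c h
  let := i.toAlgebra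
  let := j.toAlgebra
  obtain ⟨M, hM⟩ := Ideal.exists_maximal
    (TensorProduct p.ResidueField P.ResidueField Q.ResidueField)
  let : Field (_ ⧸ M) := Ideal.Quotient.field M
  let u : P.ResidueField →+* (_ ⧸ M) := (Ideal.Quotient.mk M).comp
    Algebra.TensorProduct.includeLeftRingHom
  let v : Q.ResidueField →+* (_ ⧸ M) := (Ideal.Quotient.mk M).comp
    (Algebra.TensorProduct.includeRight (R := p.ResidueField) (A := P.ResidueField)
      (B := Q.ResidueField)).toRingHom
  have huv : u.comp i = v.comp j := by
    refine RingHom.ext fun x => ?_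
    simp only [u, v, RingHom.comp_apply]
    congr 1
    exact Algebra.TensorProduct.tmul_one_eq_one_tmul (A := P.ResidueField) (B := Q.ResidueField) x
  refine ⟨_, inferInstance, u.comp (algebraMap B _), v.comp (algebraMap C _), ?_, ?_, ?_⟩
  · ext x
    have := RingHom.congr_fun huv (algebraMap A _ x)
    simpa [i, j] using this
  · rw [RingHom.ker_comp_of_injective _ u.injective]; simp
  · rw [RingHom.ker_comp_of_injective _ v.injective]; simp

end Abstract

/-- The image of a finite type extension of `K[X]` contains a nonempty principal open set. -/
lemma exists_ne_zero_forall_prime_lifts {K B : Type*} [Field K] [CommRing B]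
    (g : Polynomial K →+* B) (hg : Function.Injective g) (hft : g.FiniteType) :
    ∃ s : Polynomial K, s ≠ 0 ∧ ∀ p : Ideal (Polynomial K), p.IsPrime → s ∉ p →
      ∃ q : Ideal B, q.IsPrime ∧ q.comap g = p := by
  have hZ := PrimeSpectrum.isConstructible_range_comap
    (RingHom.FinitePresentation.of_finiteType.1 hft)
  obtain ⟨T, hT⟩ := PrimeSpectrum.exists_constructibleSetData_iff.2 hZ
  have hbot : (⊥ : PrimeSpectrum (Polynomial K)) ∈ Set.range (PrimeSpectrum.comap g) := by
    obtain ⟨q, hq, h⟩ := Ideal.exists_comap_eq_of_mem_minimalPrimes_of_injective hg ⊥ (by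
      rw [IsDomain.minimalPrimes_eq_singleton_bot]; rfl)
    exact ⟨⟨q, hq⟩, PrimeSpectrum.ext h⟩
  rw [← hT] at hbot
  simp only [PrimeSpectrum.ConstructibleSetData.toSet, Set.mem_iUnion] at hbot
  obtain ⟨C, hC, h1, h2⟩ := hbot
  refine ⟨C.f, fun h => h2 ?_, fun p hp hs => ?_⟩
  · rw [h, PrimeSpectrum.zeroLocus_singleton_zero]; trivial
  · have hmem : (⟨p, hp⟩ : PrimeSpectrum (Polynomial K)) ∈ Set.range (PrimeSpectrum.comap g) := by
      rw [← hT]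
      simp only [PrimeSpectrum.ConstructibleSetData.toSet, Set.mem_iUnion]
      refine ⟨C, hC, ?_, ?_⟩
      · intro x hx
        have h3 : x ∈ (⊥ : PrimeSpectrum (Polynomial K)).asIdeal := h1 hx
        have h4 : x = 0 := h3
        rw [h4]
        exact p.zero_mem
      · intro h
        exact hs (h rfl)
    obtain ⟨q, hq⟩ := hmem
    exact ⟨q.asIdeal, q.isPrime, congrArg PrimeSpectrum.asIdeal hq⟩

/-- Constants of a finitely generated algebra with endomorphism all of whose nonzero constants are
units are algebraic over the constants of the base field. -/
lemma constant_algebraic {K B : Type*} [Field K] [CommRing B] [Nontrivial B] [Algebra K B]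
    [Algebra.FiniteType K B] (φ : K →+* K) (f : B →+* B)
    (hf : ∀ a, f (algebraMap K B a) = algebraMap K B (φ a))
    (hunit : ∀ b, f b = b → b ≠ 0 → IsUnit b) (c : B) (hc : f c = c) :
    ∃ p : Polynomial K, p ≠ 0 ∧ (∀ m, φ (p.coeff m) = p.coeff m) ∧ Polynomial.aeval c p = 0 := by
  by_cases hinj : Function.Injective (Polynomial.aeval (R := K) c)
  · exfalso
    have hft : ((Polynomial.aeval (R := K) c : Polynomial K →ₐ[K] B) :
        Polynomial K →+* B).FiniteType := by
      refine RingHom.FiniteType.of_comp_finiteType (f := algebraMap K (Polynomial K)) ?_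
      rw [AlgHom.comp_algebraMap]
      exact (RingHom.finiteType_algebraMap).2 inferInstance
    obtain ⟨s, hs0, hs⟩ := exists_ne_zero_forall_prime_lifts _ hinj hft
    let k : Subfield K := RingHom.eqLocusField φ (RingHom.id K)
    let l : AlgebraicClosure k →ₐ[k] AlgebraicClosure K := IsAlgClosed.lift
    obtain ⟨a, ha⟩ : ∃ a : AlgebraicClosure k, Polynomial.aeval (l a) s ≠ 0 := by
      by_contra! hall
      have hroot : Set.range l ⊆ s.rootSet (AlgebraicClosure K) := by
        rintro _ ⟨a, rfl⟩
        exact (Polynomial.mem_rootSet).2 ⟨hs0, hall a⟩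
      exact Set.infinite_range_of_injective l.injective ((s.rootSet_finite _).subset hroot)
    let ev : Polynomial K →ₐ[K] AlgebraicClosure K := Polynomial.aeval (l a)
    obtain ⟨q, hq, hqs⟩ := hs (RingHom.ker ev) (RingHom.ker_isPrime _) ha
    have h_int : IsIntegral k a := Algebra.IsIntegral.isIntegral a
    have hcoef : ∀ x : k, φ (algebraMap k K x) = algebraMap k K x := fun x => x.2
    let h : Polynomial K := (minpoly k a).map (algebraMap k K)
    have h0 : h ≠ 0 := ((minpoly.monic h_int).map _).ne_zero
    have hev : h ∈ RingHom.ker ev := by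
      rw [RingHom.mem_ker]
      simp only [ev, h]
      rw [Polynomial.aeval_map_algebraMap, Polynomial.aeval_algHom_apply, minpoly.aeval, map_zero]
    have hfix : f (Polynomial.aeval c h) = Polynomial.aeval c h := by
      have hmap : h.map φ = h := by
        ext m
        simp only [h, Polynomial.coeff_map]
        exact hcoef _
      rw [Polynomial.map_aeval_eq_aeval_map (ψ := f) (φ := φ) (RingHom.ext fun a => (hf a).symm),
        hmap, hc]
    have hmem : Polynomial.aeval c h ∈ q := by
      rw [← hqs] at hev
      exact hev
    by_cases hz : Polynomial.aeval c h = 0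
    · exact h0 (hinj (hz.trans (map_zero _).symm))
    · exact hq.ne_top (Ideal.eq_top_of_isUnit_mem _ hmem (hunit _ hfix hz))
  · have h_int : IsIntegral K c := by
      rw [injective_iff_map_eq_zero] at hinj
      push Not at hinj
      obtain ⟨p, hp, hp0⟩ := hinj
      exact isAlgebraic_iff_isIntegral.1 ⟨p, hp0, hp⟩
    refine ⟨minpoly K c, minpoly.ne_zero h_int, fun m => ?_, minpoly.aeval K c⟩
    have hmap : (minpoly K c).map φ = minpoly K c := by
      refine minpoly.unique_of_degree_le_degree_minpoly K c ((minpoly.monic h_int).map φ) ?_ ?_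
      · have := Polynomial.map_aeval_eq_aeval_map (ψ := f) (φ := φ)
          (RingHom.ext fun a => (hf a).symm) (minpoly K c) c
        rw [minpoly.aeval, map_zero, hc] at this
        exact this.symm
      · exact Polynomial.degree_map_le
    conv_rhs => rw [← hmap, Polynomial.coeff_map]

/-- The restriction of a ring homomorphism to subalgebras of source and target. -/
def subalgebraRestrict {K R : Type*} [Field K] [CommRing R] [Algebra K R] (g : R →+* R)
    (S T : Subalgebra K R) (h : ∀ x ∈ S, g x ∈ T) : S →+* T where
  toFun x := ⟨g x, h x x.2⟩
  map_one' := Subtype.ext (map_one g)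
  map_mul' x y := Subtype.ext (map_mul g (x : R) (y : R))
  map_zero' := Subtype.ext (map_zero g)
  map_add' x y := Subtype.ext (map_add g (x : R) (y : R))

lemma coe_subalgebraRestrict {K R : Type*} [Field K] [CommRing R] [Algebra K R] (g : R →+* R)
    (S T : Subalgebra K R) (h : ∀ x ∈ S, g x ∈ T) (x : S) :
    (subalgebraRestrict g S T h x : R) = g x := rfl

/-- The subalgebra of polynomials in the variables of level below `i`. -/
noncomputable def Lvl (K : Type*) [Field K] (V : Type*) (i : ℕ) :
    Subalgebra K (MvPolynomial (ℕ × V) K) :=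
  MvPolynomial.supported K {v | v.1 < i}

/-- An endomorphism `f` of the polynomial ring in the variables `(i, v)` that preserves levels,
together with a shift `s` of the levels commuting with `f`. -/
structure ShiftPair (K : Type*) [Field K] (V : Type*) where
  φ : K →+* K
  σ : K →+* K
  f : MvPolynomial (ℕ × V) K →+* MvPolynomial (ℕ × V) K
  s : MvPolynomial (ℕ × V) K →+* MvPolynomial (ℕ × V) K
  f_C : ∀ a, f (MvPolynomial.C a) = MvPolynomial.C (φ a)
  s_C : ∀ a, s (MvPolynomial.C a) = MvPolynomial.C (σ a)
  s_X : ∀ j v, s (MvPolynomial.X (j, v)) = MvPolynomial.X (j + 1, v)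
  f_mem : ∀ i, ∀ x ∈ Lvl K V i, f x ∈ Lvl K V i
  comm : f.comp s = s.comp f

section Levels

variable {K : Type*} [Field K] {V : Type*}

lemma X_mem_lvl {i j : ℕ} (h : j < i) (v : V) :
    (MvPolynomial.X (j, v) : MvPolynomial (ℕ × V) K) ∈ Lvl K V i :=
  MvPolynomial.X_mem_supported.2 h

lemma C_mem_lvl (i : ℕ) (a : K) : (MvPolynomial.C a : MvPolynomial (ℕ × V) K) ∈ Lvl K V i :=
  (Lvl K V i).algebraMap_mem a

lemma lvl_mono {i j : ℕ} (h : i ≤ j) : Lvl K V i ≤ Lvl K V j :=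
  MvPolynomial.supported_mono fun _ hv => lt_of_lt_of_le hv h

lemma exists_mem_lvl (x : MvPolynomial (ℕ × V) K) : ∃ i, x ∈ Lvl K V i := by
  induction x using MvPolynomial.induction_on with
  | C a => exact ⟨0, C_mem_lvl 0 a⟩
  | add p q hp hq =>
    obtain ⟨i, hi⟩ := hp
    obtain ⟨j, hj⟩ := hq
    exact ⟨max i j, add_mem (lvl_mono (le_max_left _ _) hi) (lvl_mono (le_max_right _ _) hj)⟩
  | mul_X p v hp =>
    obtain ⟨i, hi⟩ := hp
    exact ⟨max i (v.1 + 1), mul_mem (lvl_mono (le_max_left _ _) hi)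
      (X_mem_lvl (lt_of_lt_of_le (Nat.lt_succ_self _) (le_max_right _ _)) v.2)⟩

lemma lvl_hom_ext {i : ℕ} {T : Type*} [CommRing T] {g g' : Lvl K V i →+* T}
    (hC : ∀ a, g ⟨_, C_mem_lvl i a⟩ = g' ⟨_, C_mem_lvl i a⟩)
    (hX : ∀ j v (h : j < i), g ⟨_, X_mem_lvl h v⟩ = g' ⟨_, X_mem_lvl h v⟩) : g = g' := by
  refine RingHom.ext fun ⟨x, hx⟩ => ?_
  refine Algebra.adjoin_induction (p := fun x hx => g ⟨x, hx⟩ = g' ⟨x, hx⟩) ?_ ?_ ?_ ?_ hx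
  · rintro _ ⟨⟨j, v⟩, h, rfl⟩
    exact hX j v h
  · exact hC
  · intro x y hx hy h1 h2
    change g (⟨x, hx⟩ + ⟨y, hy⟩) = g' (⟨x, hx⟩ + ⟨y, hy⟩)
    rw [map_add, map_add, h1, h2]
  · intro x y hx hy h1 h2
    change g (⟨x, hx⟩ * ⟨y, hy⟩) = g' (⟨x, hx⟩ * ⟨y, hy⟩)
    rw [map_mul, map_mul, h1, h2]

instance lvl_finiteType [Finite V] (i : ℕ) : Algebra.FiniteType K (Lvl K V i) := by
  have : Finite {v : ℕ × V | v.1 < i} :=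
    Set.Finite.subset ((Set.finite_Iio i).prod Set.finite_univ) fun v hv => ⟨hv, trivial⟩
  exact Algebra.FiniteType.equiv inferInstance (MvPolynomial.supportedEquivMvPolynomial _).symm

instance lvl_isNoetherianRing [Finite V] (i : ℕ) : IsNoetherianRing (Lvl K V i) :=
  Algebra.FiniteType.isNoetherianRing K _

/-- The inclusion of a level in the polynomial ring. -/
noncomputable def lvlVal (i : ℕ) : Lvl K V i →+* MvPolynomial (ℕ × V) K :=
  (Lvl K V i).val.toRingHom

lemma lvlVal_apply (i : ℕ) (x : Lvl K V i) : lvlVal i x = (x : MvPolynomial (ℕ × V) K) := rfl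

/-- The inclusion of one level in the next. -/
noncomputable def lvlInc (i : ℕ) : Lvl K V i →+* Lvl K V (i + 1) :=
  subalgebraRestrict (RingHom.id _) (Lvl K V i) (Lvl K V (i + 1)) fun _ hx =>
    lvl_mono (Nat.le_succ i) hx

@[simp] lemma coe_lvlInc (i : ℕ) (x : Lvl K V i) :
    (lvlInc i x : MvPolynomial (ℕ × V) K) = x := by
  rw [lvlInc, coe_subalgebraRestrict, RingHom.id_apply]

lemma lvlInc_mk {i : ℕ} {x : MvPolynomial (ℕ × V) K} (hx : x ∈ Lvl K V i) :
    lvlInc i ⟨x, hx⟩ = ⟨x, lvl_mono (Nat.le_succ i) hx⟩ :=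
  Subtype.ext (coe_lvlInc _ _)

namespace ShiftPair

variable (E : ShiftPair K V)

lemma s_mem (i : ℕ) (x) (hx : x ∈ Lvl K V i) : E.s x ∈ Lvl K V (i + 1) := by
  refine Algebra.adjoin_induction (p := fun x _ => E.s x ∈ Lvl K V (i + 1)) ?_ ?_ ?_ ?_ hx
  · rintro _ ⟨⟨j, v⟩, h, rfl⟩
    rw [E.s_X]
    exact X_mem_lvl (Nat.succ_lt_succ h) v
  · intro a
    have := E.s_C a
    rw [MvPolynomial.algebraMap_eq, this]
    exact C_mem_lvl _ _
  · intro x y _ _ h1 h2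
    rw [map_add]; exact add_mem h1 h2
  · intro x y _ _ h1 h2
    rw [map_mul]; exact mul_mem h1 h2

/-- The restriction of `f` to a level. -/
noncomputable def fl (i : ℕ) : Lvl K V i →+* Lvl K V i :=
  subalgebraRestrict E.f (Lvl K V i) (Lvl K V i) (E.f_mem i)

/-- The restriction of `s` to a level. -/
noncomputable def sl (i : ℕ) : Lvl K V i →+* Lvl K V (i + 1) :=
  subalgebraRestrict E.s (Lvl K V i) (Lvl K V (i + 1)) (E.s_mem i)

@[simp] lemma coe_fl (i : ℕ) (x : Lvl K V i) :
    (E.fl i x : MvPolynomial (ℕ × V) K) = E.f x := by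
  rw [fl, coe_subalgebraRestrict]

@[simp] lemma coe_sl (i : ℕ) (x : Lvl K V i) :
    (E.sl i x : MvPolynomial (ℕ × V) K) = E.s x := by
  rw [sl, coe_subalgebraRestrict]

lemma inc_comp_fl (i : ℕ) : (lvlInc i).comp (E.fl i) = (E.fl (i + 1)).comp (lvlInc i) :=
  RingHom.ext fun x => Subtype.ext (by
    rw [RingHom.comp_apply, RingHom.comp_apply, coe_lvlInc, coe_fl, coe_fl, coe_lvlInc])

lemma sl_comp_fl (i : ℕ) : (E.sl i).comp (E.fl i) = (E.fl (i + 1)).comp (E.sl i) :=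
  RingHom.ext fun x => Subtype.ext (by
    rw [RingHom.comp_apply, RingHom.comp_apply, coe_sl, coe_fl, coe_fl, coe_sl]
    exact (RingHom.congr_fun E.comm x).symm)

lemma val_comp_fl (i : ℕ) : (lvlVal i).comp (E.fl i) = E.f.comp (lvlVal i) :=
  RingHom.ext fun x => by
    rw [RingHom.comp_apply, RingHom.comp_apply, lvlVal_apply, lvlVal_apply, coe_fl]

end ShiftPair

end Levels

/-- Two maps on a level that agree along the shift extend to the whole polynomial ring. -/
lemma ShiftPair.exists_extend {K : Type*} [Field K] {V : Type*} (E : ShiftPair K V) {Ω : Type*}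
    [CommRing Ω] (i : ℕ) (α β : Lvl K V (i + 1) →+* Ω)
    (h : β.comp (lvlInc i) = α.comp (E.sl i)) :
    ∃ γ : MvPolynomial (ℕ × V) K →+* Ω,
      γ.comp (lvlVal (i + 1)) = α ∧ (γ.comp E.s).comp (lvlVal (i + 1)) = β := by
  classical
  let γ : MvPolynomial (ℕ × V) K →+* Ω := MvPolynomial.eval₂Hom
    (α.comp (algebraMap K (Lvl K V (i + 1))))
    (fun v => if hv : v.1 < i + 1 then α ⟨_, X_mem_lvl hv v.2⟩
      else β ⟨MvPolynomial.X (i, v.2), X_mem_lvl (Nat.lt_succ_self i) v.2⟩)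
  have hC : ∀ a, γ (MvPolynomial.C a) = α ⟨_, C_mem_lvl (i + 1) a⟩ := fun a =>
    MvPolynomial.eval₂Hom_C _ _ a
  have hX1 : ∀ j v (hj : j < i + 1), γ (MvPolynomial.X (j, v)) = α ⟨_, X_mem_lvl hj v⟩ := by
    intro j v hj
    simp only [γ, MvPolynomial.eval₂Hom_X', dif_pos hj]
  have hX2 : ∀ v, γ (MvPolynomial.X (i + 1, v)) = β ⟨_, X_mem_lvl (Nat.lt_succ_self i) v⟩ := by
    intro v
    simp only [γ, MvPolynomial.eval₂Hom_X', dif_neg (lt_irrefl (i + 1))]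
  have hh : ∀ x : Lvl K V i, β (lvlInc i x) = α (E.sl i x) := fun x => RingHom.congr_fun h x
  refine ⟨γ, lvl_hom_ext hC hX1, lvl_hom_ext (fun a => ?_) fun j v hj => ?_⟩
  · have h1 := hh ⟨_, C_mem_lvl i a⟩
    have h2 : E.sl i ⟨_, C_mem_lvl i a⟩ = ⟨_, C_mem_lvl (i + 1) (E.σ a)⟩ :=
      Subtype.ext (by rw [E.coe_sl, E.s_C])
    have h3 : lvlInc i (⟨_, C_mem_lvl i a⟩ : Lvl K V i) = ⟨_, C_mem_lvl (i + 1) a⟩ :=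
      Subtype.ext (by rw [coe_lvlInc])
    rw [h2, h3] at h1
    rw [RingHom.comp_apply, RingHom.comp_apply, lvlVal_apply, E.s_C, hC, h1]
  · rw [RingHom.comp_apply, RingHom.comp_apply, lvlVal_apply, E.s_X]
    rcases Nat.lt_succ_iff_lt_or_eq.1 hj with hj' | rfl
    · have h1 := hh ⟨_, X_mem_lvl hj' v⟩
      have h2 : E.sl i ⟨_, X_mem_lvl hj' v⟩ = ⟨_, X_mem_lvl (Nat.succ_lt_succ hj') v⟩ :=
        Subtype.ext (by rw [E.coe_sl, E.s_X])
      have h3 : lvlInc i (⟨_, X_mem_lvl hj' v⟩ : Lvl K V i) = ⟨_, X_mem_lvl hj v⟩ :=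
        Subtype.ext (by rw [coe_lvlInc])
      rw [h2, h3] at h1
      rw [hX1 _ _ (Nat.succ_lt_succ hj'), h1]
    · exact hX2 v

lemma ShiftPair.exists_glue {K : Type u} [Field K] {V : Type} (E : ShiftPair K V) (i : ℕ)
    (m : Ideal (Lvl K V i)) (m' : Ideal (Lvl K V (i + 1))) (hm : FMax (E.fl i) m)
    (hm' : FMax (E.fl (i + 1)) m') (hi : m ≤ m'.comap (lvlInc i)) (hs : m ≤ m'.comap (E.sl i)) :
    ∃ m'' : Ideal (Lvl K V (i + 1 + 1)), FMax (E.fl (i + 1 + 1)) m'' ∧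
      m' ≤ m''.comap (lvlInc (i + 1)) ∧ m' ≤ m''.comap (E.sl (i + 1)) := by
  have hi' := hm.comap_eq (E.inc_comp_fl i) hm'.1 hm'.2.1 hi
  have hs' := hm.comap_eq (E.sl_comp_fl i) hm'.1 hm'.2.1 hs
  obtain ⟨p, hp⟩ := Ideal.nonempty_minimalPrimes hm.1
  obtain ⟨P, hP, hmP, hPp⟩ := Ideal.exists_comap_eq_of_mem_minimalPrimes (I := m') (lvlInc i) p
    (by rw [hi']; exact hp)
  obtain ⟨Q, hQ, hmQ, hQp⟩ := Ideal.exists_comap_eq_of_mem_minimalPrimes (I := m') (E.sl i) p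
    (by rw [hs']; exact hp)
  obtain ⟨Ω, _, β, α, h, hβ, hα⟩ := exists_field_of_comap_eq (lvlInc i) (E.sl i) P Q
    (hPp.trans hQp.symm)
  obtain ⟨γ, hγ1, hγ2⟩ := E.exists_extend i α β h
  let J : Ideal (Lvl K V (i + 1 + 1)) := m'.map (lvlInc (i + 1)) ⊔ m'.map (E.sl (i + 1))
  have hJle : J ≤ RingHom.ker (γ.comp (lvlVal (i + 1 + 1))) := by
    refine sup_le (Ideal.map_le_iff_le_comap.2 fun x hx => ?_)
      (Ideal.map_le_iff_le_comap.2 fun x hx => ?_)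
    · have h1 : α x = 0 := by
        rw [← RingHom.mem_ker, hα]; exact hmQ hx
      rw [← hγ1] at h1
      exact h1
    · have h1 : β x = 0 := by
        rw [← RingHom.mem_ker, hβ]; exact hmP hx
      rw [← hγ2] at h1
      exact h1
  have hJtop : J ≠ ⊤ := fun h => RingHom.ker_ne_top _ (top_le_iff.1 (h ▸ hJle))
  have hJf : ∀ x ∈ J, E.fl (i + 1 + 1) x ∈ J := by
    change J ≤ J.comap (E.fl (i + 1 + 1))
    refine sup_le (Ideal.map_le_iff_le_comap.2 fun x hx => ?_)
      (Ideal.map_le_iff_le_comap.2 fun x hx => ?_)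
    · rw [Ideal.mem_comap, Ideal.mem_comap, ← RingHom.comp_apply, ← E.inc_comp_fl]
      exact le_sup_left (a := m'.map (lvlInc (i + 1))) (Ideal.mem_map_of_mem _ (hm'.2.1 x hx))
    · rw [Ideal.mem_comap, Ideal.mem_comap, ← RingHom.comp_apply, ← E.sl_comp_fl]
      exact le_sup_right (a := m'.map (lvlInc (i + 1))) (Ideal.mem_map_of_mem _ (hm'.2.1 x hx))
  obtain ⟨m'', hJm, hm''⟩ := exists_fMax_ge (E.fl (i + 1 + 1)) J hJtop hJf
  exact ⟨m'', hm'', Ideal.map_le_iff_le_comap.1 (le_sup_left.trans hJm),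
    Ideal.map_le_iff_le_comap.1 (le_sup_right.trans hJm)⟩

/-- Maximal stable ideals in all levels, compatible with inclusions and shifts. -/
def ShiftPair.IsChain {K : Type*} [Field K] {V : Type*} (E : ShiftPair K V)
    (m : ∀ i, Ideal (Lvl K V i)) : Prop :=
  ∀ i, FMax (E.fl i) (m i) ∧ m i ≤ (m (i + 1)).comap (lvlInc i) ∧
    m i ≤ (m (i + 1)).comap (E.sl i)

lemma ShiftPair.exists_chain {K : Type u} [Field K] {V : Type} (E : ShiftPair K V)
    (I : Ideal (Lvl K V 1)) (hI : I ≠ ⊤) (hfI : ∀ x ∈ I, E.fl 1 x ∈ I) :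
    ∃ m : ∀ i, Ideal (Lvl K V i), I ≤ m 1 ∧ E.IsChain m := by
  obtain ⟨m1, hIm, hm1⟩ := exists_fMax_ge (E.fl 1) I hI hfI
  have h0 : FMax (E.fl 0) (⊥ : Ideal (Lvl K V 0)) := by
    have hsurj : ∀ x : Lvl K V 0, ∃ a, algebraMap K (Lvl K V 0) a = x := by
      rintro ⟨x, hx⟩
      have h : Lvl K V 0 = ⊥ := by
        simp [Lvl]
      rw [h] at hx
      obtain ⟨a, rfl⟩ := Algebra.mem_bot.1 hx
      exact ⟨a, rfl⟩
    refine ⟨bot_ne_top, fun x hx => ?_, fun J _ _ => ?_⟩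
    · rw [Ideal.mem_bot] at hx ⊢; rw [hx, map_zero]
    · by_cases hJ : J = ⊥
      · exact Or.inl hJ
      · obtain ⟨x, hx, hx0⟩ := Submodule.exists_mem_ne_zero_of_ne_bot hJ
        obtain ⟨a, rfl⟩ := hsurj x
        have ha : a ≠ 0 := by rintro rfl; exact hx0 (map_zero _)
        exact Or.inr (Ideal.eq_top_of_isUnit_mem _ hx
          ((IsUnit.mk0 a ha).map (algebraMap K (Lvl K V 0))))
  let T : ℕ → Type u := fun i => {p : Ideal (Lvl K V i) × Ideal (Lvl K V (i + 1)) //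
    FMax (E.fl i) p.1 ∧ FMax (E.fl (i + 1)) p.2 ∧ p.1 ≤ p.2.comap (lvlInc i) ∧
      p.1 ≤ p.2.comap (E.sl i)}
  have hstep : ∀ i (t : T i), ∃ t' : T (i + 1), t'.1.1 = t.1.2 := by
    rintro i ⟨⟨m, m'⟩, h1, h2, h3, h4⟩
    obtain ⟨m'', h5, h6, h7⟩ := E.exists_glue i m m' h1 h2 h3 h4
    exact ⟨⟨(m', m''), h2, h5, h6, h7⟩, rfl⟩
  choose next hnext using hstep
  let t : ∀ i, T i := fun i => Nat.rec ⟨(⊥, m1), h0, hm1, bot_le, bot_le⟩ next i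
  have ht : ∀ i, (t (i + 1)).1.1 = (t i).1.2 := fun i => hnext i (t i)
  refine ⟨fun i => (t i).1.1, ?_, fun i => ⟨(t i).2.1, ?_, ?_⟩⟩
  · exact hIm.trans (ht 0).ge
  · exact (t i).2.2.2.1.trans (Ideal.comap_mono (ht i).ge)
  · exact (t i).2.2.2.2.trans (Ideal.comap_mono (ht i).ge)

lemma ShiftPair.IsChain.mem_of_le {K : Type*} [Field K] {V : Type*} {E : ShiftPair K V}
    {m : ∀ i, Ideal (Lvl K V i)} (hm : E.IsChain m) {i j : ℕ} (hij : i ≤ j)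
    {x : MvPolynomial (ℕ × V) K} (h : x ∈ Lvl K V i) (hx : ⟨x, h⟩ ∈ m i) :
    ∃ hj : x ∈ Lvl K V j, ⟨x, hj⟩ ∈ m j := by
  induction j, hij using Nat.le_induction with
  | base => exact ⟨h, hx⟩
  | succ j hij ih =>
    obtain ⟨hj, hxj⟩ := ih
    have h1 := (hm j).2.1 hxj
    rw [Ideal.mem_comap, lvlInc_mk] at h1
    exact ⟨_, h1⟩

/-- The union of an increasing family of ideals in an increasing family of subalgebras. -/
def unionIdeal {K R : Type*} [Field K] [CommRing R] [Algebra K R] (L : ℕ → Subalgebra K R)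
    (m : ∀ i, Ideal (L i)) (hL : ∀ x, ∃ i, x ∈ L i) (hmono : ∀ i j, i ≤ j → L i ≤ L j)
    (hm : ∀ i j, i ≤ j → ∀ x, ∀ hi : x ∈ L i, ⟨x, hi⟩ ∈ m i → ∃ hj : x ∈ L j, ⟨x, hj⟩ ∈ m j) :
    Ideal R where
  carrier := {x | ∃ i, ∃ h : x ∈ L i, ⟨x, h⟩ ∈ m i}
  zero_mem' := ⟨0, zero_mem _, (m 0).zero_mem⟩
  add_mem' := by
    rintro x y ⟨i, hi, hx⟩ ⟨j, hj, hy⟩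
    obtain ⟨hi', hx'⟩ := hm i (max i j) (le_max_left _ _) x hi hx
    obtain ⟨hj', hy'⟩ := hm j (max i j) (le_max_right _ _) y hj hy
    exact ⟨max i j, add_mem hi' hj', (m _).add_mem hx' hy'⟩
  smul_mem' := by
    rintro x y ⟨j, hj, hy⟩
    obtain ⟨i, hi⟩ := hL x
    have hi' := hmono i (max i j) (le_max_left _ _) hi
    obtain ⟨hj', hy'⟩ := hm j (max i j) (le_max_right _ _) y hj hy
    exact ⟨max i j, mul_mem hi' hj', (m _).mul_mem_left ⟨x, hi'⟩ hy'⟩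

lemma mem_unionIdeal {K R : Type*} [Field K] [CommRing R] [Algebra K R] {L : ℕ → Subalgebra K R}
    {m : ∀ i, Ideal (L i)} {hL : ∀ x, ∃ i, x ∈ L i} {hmono : ∀ i j, i ≤ j → L i ≤ L j}
    {hm : ∀ i j, i ≤ j → ∀ x, ∀ hi : x ∈ L i, ⟨x, hi⟩ ∈ m i → ∃ hj : x ∈ L j, ⟨x, hj⟩ ∈ m j}
    {x : R} : x ∈ unionIdeal L m hL hmono hm ↔ ∃ i, ∃ h : x ∈ L i, ⟨x, h⟩ ∈ m i := Iff.rfl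

lemma unionIdeal_ne_top {K R : Type*} [Field K] [CommRing R] [Algebra K R]
    {L : ℕ → Subalgebra K R}
    {m : ∀ i, Ideal (L i)} {hL : ∀ x, ∃ i, x ∈ L i} {hmono : ∀ i j, i ≤ j → L i ≤ L j}
    {hm : ∀ i j, i ≤ j → ∀ x, ∀ hi : x ∈ L i, ⟨x, hi⟩ ∈ m i → ∃ hj : x ∈ L j, ⟨x, hj⟩ ∈ m j}
    (h : ∀ i, m i ≠ ⊤) : unionIdeal L m hL hmono hm ≠ ⊤ := by
  rw [Ideal.ne_top_iff_one]
  rintro ⟨i, hi, hx⟩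
  exact (Ideal.ne_top_iff_one _).1 (h i) hx

namespace ShiftPair.IsChain

variable {K : Type*} [Field K] {V : Type*} {E : ShiftPair K V}
  {m : ∀ i, Ideal (Lvl K V i)}

/-- The union of a chain of ideals in the levels. -/
noncomputable def union (hm : E.IsChain m) : Ideal (MvPolynomial (ℕ × V) K) :=
  unionIdeal (Lvl K V) m exists_mem_lvl (fun _ _ h => lvl_mono h)
    (fun _ _ h _ hi hx => hm.mem_of_le h hi hx)

lemma mem_union (hm : E.IsChain m) {x : MvPolynomial (ℕ × V) K} :
    x ∈ hm.union ↔ ∃ i, ∃ h : x ∈ Lvl K V i, ⟨x, h⟩ ∈ m i := mem_unionIdeal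

lemma le_comap_union (hm : E.IsChain m) (i : ℕ) : m i ≤ hm.union.comap (lvlVal i) := by
  intro x hx
  rw [Ideal.mem_comap, lvlVal_apply, mem_union]
  exact ⟨i, x.2, hx⟩

lemma union_f (hm : E.IsChain m) (x) (hx : x ∈ hm.union) : E.f x ∈ hm.union := by
  obtain ⟨i, hi, hx⟩ := hm.mem_union.1 hx
  have h := hm.le_comap_union i ((hm i).1.2.1 _ hx)
  rw [Ideal.mem_comap, lvlVal_apply, E.coe_fl] at h
  exact h

lemma union_s (hm : E.IsChain m) (x) (hx : x ∈ hm.union) : E.s x ∈ hm.union := by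
  obtain ⟨i, hi, hx⟩ := hm.mem_union.1 hx
  have h0 := (hm i).2.2 hx
  rw [Ideal.mem_comap] at h0
  have h := hm.le_comap_union (i + 1) h0
  rw [Ideal.mem_comap, lvlVal_apply, E.coe_sl] at h
  exact h

lemma union_ne_top (hm : E.IsChain m) : hm.union ≠ ⊤ := by
  exact unionIdeal_ne_top fun i => (hm i).1.1

lemma comap_union (hm : E.IsChain m) (i : ℕ) : hm.union.comap (lvlVal i) = m i :=
  (hm i).1.comap_eq (E.val_comp_fl i) hm.union_ne_top hm.union_f (hm.le_comap_union i)

lemma fMax_union (hm : E.IsChain m) : FMax E.f hm.union := by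
  refine ⟨hm.union_ne_top, hm.union_f, fun J hJ hfJ => ?_⟩
  by_cases hJt : J = ⊤
  · exact Or.inr hJt
  refine Or.inl (le_antisymm (fun x hx => ?_) hJ)
  obtain ⟨i, hi⟩ := exists_mem_lvl x
  have h := (hm i).1.comap_eq (E.val_comp_fl i) hJt hfJ
    ((hm.le_comap_union i).trans (Ideal.comap_mono hJ))
  have hx' : (⟨x, hi⟩ : Lvl K V i) ∈ J.comap (lvlVal i) := by
    rw [Ideal.mem_comap, lvlVal_apply]; exact hx
  rw [h] at hx'
  exact hm.mem_union.2 ⟨i, hi, hx'⟩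

end ShiftPair.IsChain

/-- The ultraproduct of the residue fields of a sequence of primes, with the maps induced by the
powers of a ring endomorphism. -/
lemma exists_field_ultraproduct {S : Type u} [CommRing S] (P : ℕ → Ideal S)
    (hP : ∀ k, (P k).IsPrime) (s : S →+* S) :
    ∃ (F : Type u) (_ : Field F) (ψ : ℕ → S →+* F), (∀ i, (ψ (i + 1)).comp s = ψ i) ∧
      ∀ i x, ψ i x = 0 ↔ ∀ᶠ k in (Filter.hyperfilter ℕ : Filter ℕ), (s ^ (k - i)) x ∈ P k := by
  let I : Ideal (ℕ → S) :=
    { carrier := {g | ∀ᶠ k in (Filter.hyperfilter ℕ : Filter ℕ), g k ∈ P k}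
      zero_mem' := Filter.Eventually.of_forall fun k => (P k).zero_mem
      add_mem' := fun ha hb => by
        filter_upwards [ha, hb] with k h1 h2 using (P k).add_mem h1 h2
      smul_mem' := fun c g hg => by
        filter_upwards [hg] with k h using (P k).mul_mem_left (c k) h }
  have hmem : ∀ g, g ∈ I ↔ ∀ᶠ k in (Filter.hyperfilter ℕ : Filter ℕ), g k ∈ P k :=
    fun g => Iff.rfl
  have hI : I.IsPrime := by
    refine ⟨?_, fun {x y} hxy => ?_⟩
    · rw [Ideal.ne_top_iff_one, hmem]
      intro h
      obtain ⟨k, hk⟩ := h.exists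
      exact (Ideal.ne_top_iff_one _).1 (hP k).ne_top hk
    · rw [hmem] at hxy
      rw [hmem, hmem, ← Ultrafilter.eventually_or]
      filter_upwards [hxy] with k hk using (hP k).mem_or_mem hk
  let ψ : ℕ → S →+* I.ResidueField := fun i =>
    (algebraMap (ℕ → S) I.ResidueField).comp (RingHom.pi fun k => s ^ (k - i))
  refine ⟨I.ResidueField, inferInstance, ψ, fun i => RingHom.ext fun x => ?_, fun i x => ?_⟩
  · simp only [ψ, RingHom.comp_apply]
    rw [← sub_eq_zero, ← map_sub, Ideal.algebraMap_residueField_eq_zero, hmem]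
    have h : ∀ᶠ k in (Filter.hyperfilter ℕ : Filter ℕ), i + 1 ≤ k :=
      Filter.Eventually.filter_mono Nat.hyperfilter_le_atTop (Filter.eventually_ge_atTop _)
    filter_upwards [h] with k hk
    have hk' : k - i = k - (i + 1) + 1 := by omega
    change (s ^ (k - (i + 1))) (s x) - (s ^ (k - i)) x ∈ P k
    rw [hk', pow_succ, RingHom.mul_def, RingHom.comp_apply, sub_self]
    exact (P k).zero_mem
  · simp only [ψ, RingHom.comp_apply]
    rw [Ideal.algebraMap_residueField_eq_zero, hmem]
    rfl

namespace ShiftPair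

variable {K : Type*} [Field K] {V : Type*} (E : ShiftPair K V)

/-- The restriction of an ideal to a level is a periodic prime. -/
def Per (m : ∀ i, Ideal (Lvl K V i)) (i : ℕ) (Q : Ideal (MvPolynomial (ℕ × V) K)) : Prop :=
  PeriodicPrime (E.fl i) (m i) (Q.comap (lvlVal i))

variable {E} {m : ∀ i, Ideal (Lvl K V i)}

lemma val_comp_inc (i : ℕ) : (lvlVal (i + 1)).comp (lvlInc i) = (lvlVal i : Lvl K V i →+* _) :=
  RingHom.ext fun x => by rw [RingHom.comp_apply, lvlVal_apply, lvlVal_apply, coe_lvlInc]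

lemma val_comp_sl (i : ℕ) : (lvlVal (i + 1)).comp (E.sl i) = E.s.comp (lvlVal i) :=
  RingHom.ext fun x => by
    rw [RingHom.comp_apply, RingHom.comp_apply, lvlVal_apply, lvlVal_apply, E.coe_sl]

lemma Per.of_succ (hm : E.IsChain m) {i : ℕ} {Q} (h : E.Per m (i + 1) Q) : E.Per m i Q := by
  have := PeriodicPrime.comap (E.inc_comp_fl i) (hm i).2.1 h
  rwa [Ideal.comap_comap, val_comp_inc] at this

lemma Per.of_le (hm : E.IsChain m) {i j : ℕ} (hij : i ≤ j) {Q} (h : E.Per m j Q) :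
    E.Per m i Q := by
  induction j, hij using Nat.le_induction with
  | base => exact h
  | succ j hij ih => exact ih (h.of_succ hm)

lemma Per.comap_s (hm : E.IsChain m) {i : ℕ} {Q} (h : E.Per m (i + 1) Q) :
    E.Per m i (Q.comap E.s) := by
  have := PeriodicPrime.comap (E.sl_comp_fl i) (hm i).2.2 h
  rwa [Ideal.comap_comap, val_comp_sl, ← Ideal.comap_comap] at this

lemma Per.comap_s_pow (hm : E.IsChain m) {k i : ℕ} {Q} (h : E.Per m (i + k) Q) :
    E.Per m i (Q.comap (E.s ^ k)) := by
  induction k generalizing i with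
  | zero => rw [comap_pow_zero]; exact h
  | succ k ih =>
    rw [comap_pow_add, pow_one]
    have h' : E.Per m (i + 1 + k) Q := by rwa [add_right_comm]
    exact (ih h').comap_s hm

lemma Per.of_eventually (hm : E.IsChain m) {i : ℕ} {Q : ℕ → Ideal (MvPolynomial (ℕ × V) K)}
    (hQ : ∀ k, i ≤ k → E.Per m i (Q k)) {W : Ideal (MvPolynomial (ℕ × V) K)} (hW : W.IsPrime)
    (hmem : ∀ x, x ∈ W ↔ ∀ᶠ k in (Filter.hyperfilter ℕ : Filter ℕ), x ∈ Q k) :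
    E.Per m i W := by
  have hev : ∀ᶠ k in (Filter.hyperfilter ℕ : Filter ℕ), i ≤ k :=
    Filter.Eventually.filter_mono Nat.hyperfilter_le_atTop (Filter.eventually_ge_atTop _)
  obtain ⟨D, hD, hper⟩ := (hQ i le_rfl).2.2
  refine ⟨Ideal.IsPrime.comap _, fun x hx => ?_, D, hD, Ideal.ext fun x => ?_⟩
  · rw [Ideal.mem_comap, hmem]
    filter_upwards [hev] with k hk
    have := (hQ k hk).2.1 hx
    rwa [Ideal.mem_comap] at this
  · rw [Ideal.mem_comap, Ideal.mem_comap, Ideal.mem_comap, hmem, hmem]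
    refine Filter.eventually_congr ?_
    filter_upwards [hev] with k hk
    have h := (hQ i le_rfl).comap_pow_eq (hm i).1 (hQ k hk) hper
    rw [← Ideal.mem_comap, ← Ideal.mem_comap, h, Ideal.mem_comap]

lemma IsChain.exists_per [Finite V] (hm : E.IsChain m) (i : ℕ) :
    ∃ Q : Ideal (MvPolynomial (ℕ × V) K), Q.IsPrime ∧ E.Per m i Q := by
  obtain ⟨p, hp, hper⟩ := (hm i).1.exists_periodicPrime
  obtain ⟨Q, hQ, -, rfl⟩ := Ideal.exists_comap_eq_of_mem_minimalPrimes (I := hm.union)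
    (lvlVal i) p (by rw [hm.comap_union]; exact hp)
  exact ⟨Q, hQ, hper⟩

end ShiftPair

namespace ShiftPair

open Classical in
/-- The map sending variables of level below `i` to their image under `ψ` and the others to
variables not depending on the level. -/
noncomputable def theta {K : Type*} [Field K] {V : Type*} {F : Type*} [Field F]
    (ψ : MvPolynomial (ℕ × V) K →+* F) (i : ℕ) :
    MvPolynomial (ℕ × V) K →+* MvPolynomial V F :=
  MvPolynomial.eval₂Hom (MvPolynomial.C.comp (ψ.comp MvPolynomial.C)) fun v =>
    if v.1 < i then MvPolynomial.C (ψ (MvPolynomial.X v)) else MvPolynomial.X v.2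

section Theta

variable {K : Type*} [Field K] {V : Type*} {F : Type*} [Field F]

lemma theta_C (ψ : MvPolynomial (ℕ × V) K →+* F) (i : ℕ) (a : K) :
    theta ψ i (MvPolynomial.C a) = MvPolynomial.C (ψ (MvPolynomial.C a)) :=
  MvPolynomial.eval₂Hom_C _ _ a

lemma theta_X_of_lt (ψ : MvPolynomial (ℕ × V) K →+* F) {i j : ℕ} (h : j < i) (v : V) :
    theta ψ i (MvPolynomial.X (j, v)) = MvPolynomial.C (ψ (MvPolynomial.X (j, v))) := by
  rw [theta, MvPolynomial.eval₂Hom_X', if_pos h]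

lemma theta_X_of_le (ψ : MvPolynomial (ℕ × V) K →+* F) {i j : ℕ} (h : i ≤ j) (v : V) :
    theta ψ i (MvPolynomial.X (j, v)) = MvPolynomial.X v := by
  rw [theta, MvPolynomial.eval₂Hom_X', if_neg (not_lt.2 h)]

lemma theta_comp_val (ψ : MvPolynomial (ℕ × V) K →+* F) (i : ℕ) :
    (theta ψ i).comp (lvlVal i) = MvPolynomial.C.comp (ψ.comp (lvlVal i)) := by
  refine lvl_hom_ext (fun a => ?_) fun j v h => ?_
  · simp only [RingHom.comp_apply, lvlVal_apply]
    exact theta_C ψ i a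
  · simp only [RingHom.comp_apply, lvlVal_apply]
    exact theta_X_of_lt ψ h v

lemma theta_comp_s (E : ShiftPair K V) {ψ ψ' : MvPolynomial (ℕ × V) K →+* F}
    (h : ψ'.comp E.s = ψ) (i : ℕ) : (theta ψ' (i + 1)).comp E.s = theta ψ i := by
  have h' : ∀ x, ψ' (E.s x) = ψ x := fun x => RingHom.congr_fun h x
  refine MvPolynomial.ringHom_ext (fun a => ?_) fun v => ?_
  · rw [RingHom.comp_apply, theta_C, ← h', E.s_C, theta_C]
  · obtain ⟨j, v⟩ := v
    rw [RingHom.comp_apply, E.s_X]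
    by_cases hj : j < i
    · rw [theta_X_of_lt _ hj, theta_X_of_lt _ (Nat.succ_lt_succ hj), ← h', E.s_X]
    · rw [theta_X_of_le _ (not_lt.1 hj), theta_X_of_le _ (Nat.succ_le_succ (not_lt.1 hj))]

end Theta

variable {K : Type u} [Field K] {V : Type} {E : ShiftPair K V} {m : ∀ i, Ideal (Lvl K V i)}
  {F : Type u} [Field F] {ψ : ℕ → MvPolynomial (ℕ × V) K →+* F}

/-- The equations of level `i + 1` over the field generated by the solutions of level `i`. -/
noncomputable def relIdeal (m : ∀ i, Ideal (Lvl K V i))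
    (ψ : ℕ → MvPolynomial (ℕ × V) K →+* F) (i : ℕ) : Ideal (MvPolynomial V F) :=
  (m (i + 1)).map ((theta (ψ i) i).comp (lvlVal (i + 1)))

lemma IsChain.relIdeal_mono (hm : E.IsChain m) (hψ : ∀ i, (ψ (i + 1)).comp E.s = ψ i) :
    Monotone (relIdeal m ψ) := by
  refine monotone_nat_of_le_succ fun i => Ideal.map_le_iff_le_comap.2 fun x hx => ?_
  have h := (hm (i + 1)).2.2 hx
  rw [Ideal.mem_comap] at h
  have h' := Ideal.mem_map_of_mem ((theta (ψ (i + 1)) (i + 1)).comp (lvlVal (i + 1 + 1))) h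
  rw [← RingHom.comp_apply, RingHom.comp_assoc, val_comp_sl, ← RingHom.comp_assoc,
    theta_comp_s E (hψ i)] at h'
  exact h'

/-- When the equations are stationary, a periodic prime has a compatible extension to the next
level. -/
lemma IsChain.exists_extension [Finite V] (hm : E.IsChain m)
    (hψ : ∀ i, (ψ (i + 1)).comp E.s = ψ i)
    {i : ℕ} (hper : E.Per m (i + 1) (RingHom.ker (ψ (i + 1))))
    (hst : relIdeal m ψ (i + 1) = relIdeal m ψ i)
    {Q : Ideal (Lvl K V (i + 1))} (hQ : PeriodicPrime (E.fl (i + 1)) (m (i + 1)) Q)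
    (hQi : Q.comap (lvlInc i) = (RingHom.ker (ψ i)).comap (lvlVal i)) :
    ∃ M : Ideal (Lvl K V (i + 1 + 1)), PeriodicPrime (E.fl (i + 1 + 1)) (m (i + 1 + 1)) M ∧
      M.comap (E.sl (i + 1)) = Q ∧
      M.comap (lvlInc (i + 1)) = (RingHom.ker (ψ (i + 1))).comap (lvlVal (i + 1)) := by
  have hQp := hQ.1
  obtain ⟨Ω, _, α, β, h, -, hβ⟩ := exists_field_of_comap_eq ((ψ i).comp (lvlVal i)) (lvlInc i)
    (⊥ : Ideal F) Q (by rw [hQi, ← Ideal.comap_comap]; rfl)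
  have hh : ∀ x : Lvl K V i, α (ψ i (lvlVal i x)) = β (lvlInc i x) :=
    fun x => RingHom.congr_fun h x
  let ev : MvPolynomial V F →+* Ω := MvPolynomial.eval₂Hom α fun v =>
    β ⟨_, X_mem_lvl (Nat.lt_succ_self i) v⟩
  have hevC : ∀ a, ev (MvPolynomial.C a) = α a := fun a => MvPolynomial.eval₂Hom_C _ _ a
  have hev : (ev.comp (theta (ψ i) i)).comp (lvlVal (i + 1)) = β := by
    refine lvl_hom_ext (fun a => ?_) fun j v hj => ?_
    · have h1 := hh ⟨_, C_mem_lvl i a⟩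
      rw [lvlInc_mk, lvlVal_apply] at h1
      rw [RingHom.comp_apply, RingHom.comp_apply, lvlVal_apply, theta_C, hevC]
      exact h1
    · rw [RingHom.comp_apply, RingHom.comp_apply, lvlVal_apply]
      rcases Nat.lt_succ_iff_lt_or_eq.1 hj with hj' | rfl
      · have h1 := hh ⟨_, X_mem_lvl hj' v⟩
        rw [lvlInc_mk, lvlVal_apply] at h1
        rw [theta_X_of_lt _ hj', hevC]
        exact h1
      · rw [theta_X_of_le _ le_rfl]
        exact MvPolynomial.eval₂Hom_X' _ _ v
  let β' : Lvl K V (i + 1 + 1) →+* Ω :=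
    (ev.comp (theta (ψ (i + 1)) (i + 1))).comp (lvlVal (i + 1 + 1))
  have hβs : β'.comp (E.sl (i + 1)) = β := by
    rw [← hev, ← theta_comp_s E (hψ i) i]
    simp only [β', RingHom.comp_assoc, val_comp_sl]
  have hβi : β'.comp (lvlInc (i + 1)) = α.comp ((ψ (i + 1)).comp (lvlVal (i + 1))) := by
    refine RingHom.ext fun x => ?_
    have h1 := RingHom.congr_fun (theta_comp_val (ψ (i + 1)) (i + 1)) x
    simp only [β', RingHom.comp_assoc, val_comp_inc]
    rw [RingHom.comp_apply, h1, RingHom.comp_apply, hevC, RingHom.comp_apply,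
      RingHom.comp_apply, RingHom.comp_apply]
  have hker : m (i + 1 + 1) ≤ RingHom.ker β' := by
    intro x hx
    have h1 : (theta (ψ (i + 1)) (i + 1)).comp (lvlVal (i + 1 + 1)) x ∈ relIdeal m ψ i := by
      rw [← hst]; exact Ideal.mem_map_of_mem _ hx
    have h2 : relIdeal m ψ i ≤ RingHom.ker ev := by
      refine Ideal.map_le_iff_le_comap.2 fun y hy => ?_
      rw [Ideal.mem_comap, RingHom.mem_ker, ← RingHom.comp_apply, ← RingHom.comp_assoc, hev,
        ← RingHom.mem_ker, hβ]
      exact hQ.2.1 hy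
    have h3 := h2 h1
    rw [RingHom.mem_ker] at h3 ⊢
    exact h3
  obtain ⟨p, -, hp⟩ := (hm (i + 1 + 1)).1.exists_periodicPrime
  obtain ⟨j, hj⟩ := hp.exists_comap_le (hm _).1 (RingHom.ker_isPrime β') hker
  have hM := hp.comap_pow (hm _).1 j
  refine ⟨_, hM, ?_, ?_⟩
  · refine PeriodicPrime.eq_of_le (hm (i + 1)).1
      (PeriodicPrime.comap (E.sl_comp_fl (i + 1)) (hm (i + 1)).2.2 hM) hQ ?_
    refine (Ideal.comap_mono hj).trans (le_of_eq ?_)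
    rw [RingHom.comap_ker, hβs, hβ]
  · refine PeriodicPrime.eq_of_le (hm (i + 1)).1
      (PeriodicPrime.comap (E.inc_comp_fl (i + 1)) (hm (i + 1)).2.1 hM) hper ?_
    refine (Ideal.comap_mono hj).trans (le_of_eq ?_)
    rw [RingHom.comap_ker, hβi, RingHom.comap_ker]
    exact RingHom.ker_comp_of_injective _ α.injective

lemma IsChain.eq_of_comap_inc_eq [Finite V] (hm : E.IsChain m)
    (hψ : ∀ i, (ψ (i + 1)).comp E.s = ψ i) (hper : ∀ i, E.Per m i (RingHom.ker (ψ i)))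
    {i : ℕ} (hst : relIdeal m ψ (i + 1) = relIdeal m ψ i)
    {Q Q' : Ideal (Lvl K V (i + 1))} (hQ : PeriodicPrime (E.fl (i + 1)) (m (i + 1)) Q)
    (hQi : Q.comap (lvlInc i) = (RingHom.ker (ψ i)).comap (lvlVal i))
    (hQ' : PeriodicPrime (E.fl (i + 1)) (m (i + 1)) Q')
    (hQi' : Q'.comap (lvlInc i) = (RingHom.ker (ψ i)).comap (lvlVal i)) : Q' = Q := by
  obtain ⟨M, hM, hMs, hMi⟩ := hm.exists_extension hψ (hper _) hst hQ hQi
  obtain ⟨M', hM', hMs', hMi'⟩ := hm.exists_extension hψ (hper _) hst hQ' hQi'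
  obtain ⟨j, rfl⟩ := hM.exists_eq_comap (hm _).1 hM'
  rw [comap_comap_pow (E.inc_comp_fl _), hMi] at hMi'
  rw [comap_comap_pow (E.sl_comp_fl _), hMs] at hMs'
  rw [← hMs']
  exact (hper (i + 1)).comap_pow_eq (hm _).1 hQ hMi'

/-- The union of the chain lies in a periodic prime. -/
lemma IsChain.exists_periodicPrime [Finite V] (hm : E.IsChain m) :
    ∃ P, PeriodicPrime E.f hm.union P := by
  choose P hP hPer using hm.exists_per
  obtain ⟨F, _, ψ, hψ, hψ0⟩ := exists_field_ultraproduct P hP E.s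
  have hper : ∀ i, E.Per m i (RingHom.ker (ψ i)) := fun i =>
    Per.of_eventually hm (Q := fun k => (P k).comap (E.s ^ (k - i))) (fun k hk =>
      Per.comap_s_pow hm (by rw [Nat.add_sub_cancel' hk]; exact hPer k)) (RingHom.ker_isPrime _)
      (fun x => hψ0 i x)
  obtain ⟨F', _, ψ', -, hψ0'⟩ := exists_field_ultraproduct P hP (RingHom.id _)
  let W := RingHom.ker (ψ' 0)
  have hW : ∀ i, E.Per m i W := fun i =>
    Per.of_eventually hm (Q := P) (fun k hk => (hPer k).of_le hm hk) (RingHom.ker_isPrime _)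
      (fun x => by
        have h1 : ∀ k, (RingHom.id (MvPolynomial (ℕ × V) K)) ^ k = RingHom.id _ :=
          fun k => one_pow k
        have := hψ0' 0 x
        simp only [h1] at this
        exact this)
  obtain ⟨N, hN⟩ := monotone_stabilizes_iff_noetherian.2 (inferInstance :
    IsNoetherian (MvPolynomial V F) (MvPolynomial V F)) ⟨relIdeal m ψ, hm.relIdeal_mono hψ⟩
  have hN' : ∀ i, N ≤ i → relIdeal m ψ (i + 1) = relIdeal m ψ i := fun i hi =>
    (hN (i + 1) (hi.trans (Nat.le_succ i))).symm.trans (hN i hi)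
  obtain ⟨D, hD, hDN⟩ := (hW N).2.2
  have hall : ∀ i, N ≤ i → ∀ Q, PeriodicPrime (E.fl i) (m i) Q → Q.comap (E.fl i ^ D) = Q := by
    intro i hi
    induction i, hi using Nat.le_induction with
    | base => exact fun Q hQ => (hW N).comap_pow_eq (hm N).1 hQ hDN
    | succ i hi ih =>
      have hQ0 : PeriodicPrime (E.fl (i + 1)) (m (i + 1)) _ := hW (i + 1)
      obtain ⟨j, hj⟩ := PeriodicPrime.exists_eq_comap (hm i).1
        (PeriodicPrime.comap (E.inc_comp_fl i) (hm i).2.1 hQ0) (hper i)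
      have hQ1 := hQ0.comap_pow (hm _).1 j
      rw [← comap_comap_pow (E.inc_comp_fl i)] at hj
      have h2 := hm.eq_of_comap_inc_eq hψ hper (hN' i hi) hQ1 hj.symm
        (hQ1.comap_pow (hm _).1 D) (by
          rw [comap_comap_pow (E.inc_comp_fl i), ← hj]
          exact ih _ (hper i))
      exact fun Q hQ => hQ1.comap_pow_eq (hm _).1 hQ h2
  refine ⟨W, RingHom.ker_isPrime _, fun x hx => ?_, D, hD, Ideal.ext fun x => ?_⟩
  · obtain ⟨i, hi, hx⟩ := hm.mem_union.1 hx
    have := (hW i).2.1 hx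
    rwa [Ideal.mem_comap, lvlVal_apply] at this
  · obtain ⟨i0, hi0⟩ := exists_mem_lvl x
    let i := max N i0
    have hi : x ∈ Lvl K V i := lvl_mono (le_max_right _ _) hi0
    have h := hall i (le_max_left _ _) _ (hW i)
    rw [← comap_comap_pow (E.val_comp_fl i)] at h
    have h' := Ideal.ext_iff.1 h ⟨x, hi⟩
    rwa [Ideal.mem_comap, Ideal.mem_comap (f := lvlVal i), lvlVal_apply] at h'

end ShiftPair

section Quotient

variable {S : Type*} [CommRing S] {f : S →+* S} {M : Ideal S} {Φ : S ⧸ M →+* S ⧸ M}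

lemma FMax.diffSimple (hM : FMax f M)
    (hΦ : (Ideal.Quotient.mk M).comp f = Φ.comp (Ideal.Quotient.mk M)) : DiffSimple Φ := by
  have : Nontrivial (S ⧸ M) := Ideal.Quotient.nontrivial_iff.2 hM.1
  refine ⟨bot_ne_top, fun I hI => ?_⟩
  have hmap := Ideal.map_comap_of_surjective _ (Ideal.Quotient.mk_surjective (I := M)) I
  rcases hM.2.2 (I.comap (Ideal.Quotient.mk M)) (fun x hx => by
      rw [Ideal.mem_comap, Ideal.Quotient.eq_zero_iff_mem.2 hx]; exact I.zero_mem)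
      (fun x hx => by
        rw [Ideal.mem_comap, ← RingHom.comp_apply, hΦ]
        exact hI _ hx) with h | h
  · left
    rw [← hmap, h, Ideal.map_quotient_self]
  · right
    rw [← hmap, h, Ideal.map_top]

lemma DiffSimple.fMax_bot {R : Type*} [CommRing R] {Φ : R →+* R} (h : DiffSimple Φ) :
    FMax Φ ⊥ :=
  ⟨h.1, fun x hx => by rw [Ideal.mem_bot] at hx ⊢; rw [hx, map_zero], fun I _ hI => h.2 I hI⟩

lemma DiffSimple.isUnit {R : Type*} [CommRing R] {Φ : R →+* R} (h : DiffSimple Φ) {b : R}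
    (hb : Φ b = b) (hb0 : b ≠ 0) : IsUnit b := by
  rcases h.2 (Ideal.span {b}) (fun x hx => by
    obtain ⟨c, rfl⟩ := Ideal.mem_span_singleton'.1 hx
    rw [map_mul, hb]
    exact Ideal.mem_span_singleton'.2 ⟨_, rfl⟩) with h | h
  · exact absurd (Ideal.span_singleton_eq_bot.1 h) hb0
  · exact Ideal.span_singleton_eq_top.1 h

lemma PeriodicPrime.pseudoDomain {P : Ideal S} (hP : PeriodicPrime f M P) (hM : FMax f M)
    (hΦ : (Ideal.Quotient.mk M).comp f = Φ.comp (Ideal.Quotient.mk M)) : PseudoDomain Φ := by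
  obtain ⟨hprime, hle, D, hD, hPD⟩ := hP
  have hsurj := Ideal.Quotient.mk_surjective (I := M)
  have hcomap : (P.map (Ideal.Quotient.mk M)).comap (Ideal.Quotient.mk M) = P :=
    Ideal.comap_map_mk hle
  have hq : (P.map (Ideal.Quotient.mk M)).IsPrime :=
    Ideal.map_isPrime_of_surjective hsurj (by rw [Ideal.mk_ker]; exact hle)
  have hper : (P.map (Ideal.Quotient.mk M)).comap (Φ ^ D) = P.map (Ideal.Quotient.mk M) := by
    apply Ideal.comap_injective_of_surjective _ hsurj
    rw [comap_comap_pow hΦ, hcomap, hPD]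
  exact ⟨D, hD, _, hq, hper, le_antisymm bot_le
    ((hM.diffSimple hΦ).fMax_bot.iInf_comap_le hq.ne_top bot_le hD hper)⟩

end Quotient

lemma ShiftPair.IsChain.constant_algebraic {K : Type*} [Field K] {V : Type*} [Finite V]
    {E : ShiftPair K V} {m : ∀ i, Ideal (Lvl K V i)} (hm : E.IsChain m)
    {Φ : MvPolynomial (ℕ × V) K ⧸ hm.union →+* MvPolynomial (ℕ × V) K ⧸ hm.union}
    (hΦ : (Ideal.Quotient.mk hm.union).comp E.f = Φ.comp (Ideal.Quotient.mk hm.union))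
    (r : MvPolynomial (ℕ × V) K ⧸ hm.union) (hr : Φ r = r) :
    ∃ p : Polynomial K, p ≠ 0 ∧ (∀ k, E.φ (p.coeff k) = p.coeff k) ∧
      Polynomial.aeval r p = 0 := by
  obtain ⟨x, rfl⟩ := Ideal.Quotient.mk_surjective r
  obtain ⟨i, hi⟩ := exists_mem_lvl x
  let B := Lvl K V i ⧸ m i
  let fB : B →+* B := Ideal.quotientMap (m i) (E.fl i) fun y hy => (hm i).1.2.1 y hy
  have hfB : (Ideal.Quotient.mk (m i)).comp (E.fl i) = fB.comp (Ideal.Quotient.mk (m i)) :=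
    (Ideal.quotientMap_comp_mk (f := E.fl i) fun y hy => (hm i).1.2.1 y hy).symm
  have hsimple := (hm i).1.diffSimple hfB
  have : Nontrivial B := Ideal.Quotient.nontrivial_iff.2 (hm i).1.1
  let ι : B →+* MvPolynomial (ℕ × V) K ⧸ hm.union :=
    Ideal.quotientMap hm.union (lvlVal i) (hm.le_comap_union i)
  have hιmk : ∀ y, ι (Ideal.Quotient.mk (m i) y) = Ideal.Quotient.mk hm.union (lvlVal i y) :=
    fun y => by rw [Ideal.quotientMap_mk]
  have hι : Function.Injective ι :=
    Ideal.quotientMap_injective' (hm.comap_union i).le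
  let c : B := Ideal.Quotient.mk (m i) ⟨x, hi⟩
  have hιc : ι c = Ideal.Quotient.mk hm.union x := by
    rw [hιmk, lvlVal_apply]
  have hc : fB c = c := by
    apply hι
    rw [← RingHom.comp_apply fB, ← hfB, RingHom.comp_apply, hιmk, lvlVal_apply, E.coe_fl, hιc,
      ← RingHom.comp_apply, hΦ, RingHom.comp_apply, hr]
  have halg : ∀ a, fB (algebraMap K B a) = algebraMap K B (E.φ a) := by
    intro a
    have h1 : E.fl i ⟨_, C_mem_lvl i a⟩ = ⟨_, C_mem_lvl i (E.φ a)⟩ :=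
      Subtype.ext (by rw [E.coe_fl, E.f_C])
    have h2 := RingHom.congr_fun hfB ⟨_, C_mem_lvl i a⟩
    rw [RingHom.comp_apply, h1, RingHom.comp_apply] at h2
    exact h2.symm
  obtain ⟨p, hp0, hp, hpc⟩ := _root_.constant_algebraic E.φ fB halg
    (fun b hb hb0 => hsimple.isUnit hb hb0) c hc
  refine ⟨p, hp0, hp, ?_⟩
  have h := congrArg ι hpc
  rw [map_zero, Polynomial.aeval_def, Polynomial.hom_eval₂, hιc] at h
  exact h

section Concrete

open MvPolynomial

variable {K : Type*} [Field K] {n : ℕ}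

/-- The unknowns of a `σ`-Picard–Vessiot ring: the entries of a fundamental solution matrix and
the inverse of its determinant. -/
abbrev PVVar (n : ℕ) : Type := (Fin n × Fin n) ⊕ Unit

/-- The image of the variable `(i, v)` under the endomorphism determined by the system
`φ(y) = Ay`. -/
noncomputable def pvImage (σ : K →+* K) (A : Matrix (Fin n) (Fin n) K) :
    ℕ × PVVar n → MvPolynomial (ℕ × PVVar n) K
  | (i, Sum.inl (p, q)) => ∑ r, C ((σ ^ i) (A p r)) * X (i, Sum.inl (r, q))
  | (i, Sum.inr ()) => C ((σ ^ i) (A.det)⁻¹) * X (i, Sum.inr ())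

lemma pvImage_mem (σ : K →+* K) (A : Matrix (Fin n) (Fin n) K) {i j : ℕ} (h : j < i)
    (v : PVVar n) : pvImage σ A (j, v) ∈ Lvl K (PVVar n) i := by
  rcases v with ⟨p, q⟩ | ⟨⟩
  · exact sum_mem fun r _ => mul_mem (C_mem_lvl i _) (X_mem_lvl h _)
  · exact mul_mem (C_mem_lvl i _) (X_mem_lvl h _)

/-- The polynomial ring in the iterated shifts of the unknowns of a `σ`-Picard–Vessiot ring, with
the endomorphisms extending `φ` and `σ`. -/
noncomputable def pvShiftPair (φ σ : K →+* K) (hcomm : φ.comp σ = σ.comp φ)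
    (A : Matrix (Fin n) (Fin n) K) : ShiftPair K (PVVar n) where
  φ := φ
  σ := σ
  f := eval₂Hom (C.comp φ) (pvImage σ A)
  s := eval₂Hom (C.comp σ) fun v => X (v.1 + 1, v.2)
  f_C a := eval₂Hom_C _ _ _
  s_C a := eval₂Hom_C _ _ _
  s_X j v := eval₂Hom_X' _ _ _
  f_mem i x hx := by
    refine Algebra.adjoin_induction
      (p := fun x _ => eval₂Hom (C.comp φ) (pvImage σ A) x ∈ Lvl K (PVVar n) i) ?_ ?_ ?_ ?_ hx
    · rintro _ ⟨⟨j, v⟩, h, rfl⟩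
      rw [eval₂Hom_X']
      exact pvImage_mem σ A h v
    · intro a
      rw [MvPolynomial.algebraMap_eq, eval₂Hom_C]
      exact C_mem_lvl i _
    · intro x y _ _ h1 h2
      rw [map_add]
      exact add_mem h1 h2
    · intro x y _ _ h1 h2
      rw [map_mul]
      exact mul_mem h1 h2
  comm := by
    refine ringHom_ext (fun a => ?_) fun ⟨i, v⟩ => ?_
    · simp only [RingHom.comp_apply, eval₂Hom_C]
      rw [← RingHom.comp_apply φ, hcomm, RingHom.comp_apply]
    · have hσ : ∀ a : K, σ ((σ ^ i) a) = (σ ^ (i + 1)) a := fun a => by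
        rw [pow_succ', RingHom.mul_def, RingHom.comp_apply]
      simp only [RingHom.comp_apply, eval₂Hom_X']
      rcases v with ⟨p, q⟩ | ⟨⟩
      · simp only [pvImage, map_sum, map_mul, eval₂Hom_C, eval₂Hom_X', RingHom.comp_apply, hσ]
      · simp only [pvImage, map_mul, eval₂Hom_C, eval₂Hom_X', RingHom.comp_apply, hσ]

/-- The generic matrix of unknowns of level zero. -/
noncomputable def pvMatrix (K : Type*) [Field K] (n : ℕ) :
    Matrix (Fin n) (Fin n) (MvPolynomial (ℕ × PVVar n) K) :=
  Matrix.of fun p q => X (0, Sum.inl (p, q))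

/-- The relation stating that the last unknown inverts the determinant. -/
noncomputable def pvRel (K : Type*) [Field K] (n : ℕ) : MvPolynomial (ℕ × PVVar n) K :=
  (pvMatrix K n).det * X (0, Sum.inr ()) - 1

lemma pvRel_mem : pvRel K n ∈ Lvl K (PVVar n) 1 := by
  refine sub_mem (mul_mem ?_ (X_mem_lvl zero_lt_one _)) (one_mem _)
  rw [Matrix.det_apply]
  exact sum_mem fun τ _ => Subalgebra.zsmul_mem _
    (prod_mem fun p _ => X_mem_lvl zero_lt_one _) _

variable (φ σ : K →+* K) (hcomm : φ.comp σ = σ.comp φ) (A : Matrix (Fin n) (Fin n) K)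

lemma map_pvMatrix :
    (pvMatrix K n).map (pvShiftPair φ σ hcomm A).f = A.map C * pvMatrix K n := by
  ext1 p q
  rw [Matrix.map_apply, Matrix.mul_apply]
  exact (eval₂Hom_X' _ _ _).trans (by simp [pvImage, pvMatrix])

lemma map_pvRel (hA : A.det ≠ 0) :
    (pvShiftPair φ σ hcomm A).f (pvRel K n) = pvRel K n := by
  have h1 : (pvShiftPair φ σ hcomm A).f (pvMatrix K n).det = C A.det * (pvMatrix K n).det := by
    rw [RingHom.map_det, RingHom.mapMatrix_apply, map_pvMatrix, Matrix.det_mul, RingHom.map_det,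
      RingHom.mapMatrix_apply]
  have h2 : (pvShiftPair φ σ hcomm A).f (X (0, Sum.inr ())) =
      C (A.det)⁻¹ * X (0, Sum.inr ()) := (eval₂Hom_X' _ _ _).trans (by simp [pvImage])
  rw [pvRel, map_sub, map_mul, map_one, h1, h2, mul_mul_mul_comm, ← C_mul, mul_inv_cancel₀ hA,
    C_1, one_mul]

lemma span_pvRel_ne_top :
    Ideal.span {(⟨pvRel K n, pvRel_mem⟩ : Lvl K (PVVar n) 1)} ≠ ⊤ := by
  let g : MvPolynomial (ℕ × PVVar n) K →+* K := eval₂Hom (RingHom.id K) fun v =>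
    Sum.elim (fun pq => (1 : Matrix (Fin n) (Fin n) K) pq.1 pq.2) (fun _ => 1) v.2
  have hg : g (pvRel K n) = 0 := by
    have h1 : g (pvMatrix K n).det = 1 := by
      have h : (pvMatrix K n).map g = 1 := by
        ext1 p q
        exact eval₂Hom_X' _ _ _
      rw [RingHom.map_det, RingHom.mapMatrix_apply, h, Matrix.det_one]
    have h2 : g (X (0, Sum.inr ())) = 1 := eval₂Hom_X' _ _ _
    rw [pvRel, map_sub, map_mul, h1, h2, map_one, one_mul, sub_self]
  have hle : Ideal.span {(⟨pvRel K n, pvRel_mem⟩ : Lvl K (PVVar n) 1)} ≤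
      RingHom.ker (g.comp (lvlVal 1)) := by
    rw [Ideal.span_singleton_le_iff_mem, RingHom.mem_ker, RingHom.comp_apply, lvlVal_apply, hg]
  intro h
  exact RingHom.ker_ne_top _ (top_le_iff.1 (h ▸ hle))

end Concrete

/-- Existence of `σ`-Picard–Vessiot rings: if `K` is a `φσ`-field with `K^{φ^∞} = K^φ`
and `σ : K^φ → K^φ` surjective, then for every `A ∈ GLₙ(K)` there is a `σ`-PV ring `R`
for `φ(y) = Ay` whose `Φ`-constants are algebraic over `K^φ`. -/
theorem exists_sigma_pv_ring
    {K : Type u} [Field K] {n : ℕ}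
    (φ σ : K →+* K) (hcomm : φ.comp σ = σ.comp φ)
    (hper : ∀ (a : K) (m : ℕ), 1 ≤ m → (⇑φ)^[m] a = a → φ a = a)
    (honto : ∀ a : K, φ a = a → ∃ b : K, φ b = b ∧ σ b = a)
    (A : Matrix (Fin n) (Fin n) K) (hA : IsUnit A.det) :
    ∃ (R : Type u) (_ : CommRing R) (_ : Algebra K R) (Φ σ' : R →+* R)
      (Y : Matrix (Fin n) (Fin n) R) (w : ℕ → R),
      -- `R` is a `K`-`φσ`-algebra
      Φ.comp σ' = σ'.comp Φ ∧
      (∀ a : K, Φ (algebraMap K R a) = algebraMap K R (φ a)) ∧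
      (∀ a : K, σ' (algebraMap K R a) = algebraMap K R (σ a)) ∧
      -- `Y` is a fundamental solution matrix of `φ(y) = Ay`
      IsUnit Y.det ∧
      Y.map ⇑Φ = A.map ⇑(algebraMap K R) * Y ∧
      -- `R` is `σ`-generated by the entries of the `σ'^i(Y)` and the inverses of their
      -- determinants
      (∀ i : ℕ, (Y.map ((⇑σ')^[i])).det * w i = 1) ∧
      Algebra.adjoin K
        ({x : R | ∃ (i : ℕ) (p q : Fin n), (Y.map ((⇑σ')^[i])) p q = x} ∪ Set.range w)
        = ⊤ ∧
      -- `R` is `Φ`-simple and a `Φ`-pseudo domain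
      DiffSimple Φ ∧ PseudoDomain Φ ∧
      -- every `Φ`-constant of `R` is algebraic over `K^φ`
      (∀ r : R, Φ r = r → ∃ p : Polynomial R, p ≠ 0 ∧
        (∀ m : ℕ, ∃ a : K, φ a = a ∧ algebraMap K R a = p.coeff m) ∧
        Polynomial.eval r p = 0) := by
  have hA0 : A.det ≠ 0 := hA.ne_zero
  let E := pvShiftPair φ σ hcomm A
  obtain ⟨m, hIm, hm⟩ := E.exists_chain
    (Ideal.span {(⟨pvRel K n, pvRel_mem⟩ : Lvl K (PVVar n) 1)}) span_pvRel_ne_top (by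
      intro x hx
      obtain ⟨c, rfl⟩ := Ideal.mem_span_singleton'.1 hx
      have h : E.fl 1 ⟨pvRel K n, pvRel_mem⟩ = ⟨pvRel K n, pvRel_mem⟩ :=
        Subtype.ext (by rw [E.coe_fl]; exact map_pvRel φ σ hcomm A hA0)
      rw [map_mul, h]
      exact Ideal.mem_span_singleton'.2 ⟨_, rfl⟩)
  obtain ⟨P, hP⟩ := hm.exists_periodicPrime
  let π := Ideal.Quotient.mk hm.union
  let Φ := Ideal.quotientMap hm.union E.f hm.union_f
  let τ := Ideal.quotientMap hm.union E.s hm.union_s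
  have hΦ : π.comp E.f = Φ.comp π := (Ideal.quotientMap_comp_mk hm.union_f).symm
  have hτ : π.comp E.s = τ.comp π := (Ideal.quotientMap_comp_mk hm.union_s).symm
  have hΦ' : ∀ x, Φ (π x) = π (E.f x) := fun x => (RingHom.congr_fun hΦ x).symm
  have hτ' : ∀ x, τ (π x) = π (E.s x) := fun x => (RingHom.congr_fun hτ x).symm
  have hC : ∀ a, algebraMap K (MvPolynomial (ℕ × PVVar n) K ⧸ hm.union) a =
    π (MvPolynomial.C a) := fun a => rfl
  have : Nontrivial (MvPolynomial (ℕ × PVVar n) K ⧸ hm.union) :=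
    Ideal.Quotient.nontrivial_iff.2 hm.union_ne_top
  have hiter : ∀ i v, τ^[i] (π (MvPolynomial.X (0, v))) = π (MvPolynomial.X (i, v)) := by
    intro i v
    induction i with
    | zero => rfl
    | succ i ih => rw [Function.iterate_succ_apply', ih, hτ', E.s_X]
  let Y := (pvMatrix K n).map π
  let w : ℕ → MvPolynomial (ℕ × PVVar n) K ⧸ hm.union :=
    fun i => π (MvPolynomial.X (i, Sum.inr ()))
  have hYi : ∀ i p q, (Y.map (τ^[i])) p q = π (MvPolynomial.X (i, Sum.inl (p, q))) :=
    fun i p q => hiter i _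
  have hYw : Y.det * w 0 = 1 := by
    have h : pvRel K n ∈ hm.union :=
      hm.le_comap_union 1 (hIm (Ideal.mem_span_singleton_self _))
    have h2 := Ideal.Quotient.eq_zero_iff_mem.2 h
    rw [pvRel, map_sub, map_mul, map_one, sub_eq_zero, RingHom.map_det,
      RingHom.mapMatrix_apply] at h2
    exact h2
  have hYwi : ∀ i, (Y.map (τ^[i])).det * w i = 1 := by
    intro i
    have h := congrArg (τ ^ i) hYw
    rw [map_mul, map_one, RingHom.map_det, RingHom.mapMatrix_apply, RingHom.coe_pow, hiter] at h
    exact h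
  refine ⟨MvPolynomial (ℕ × PVVar n) K ⧸ hm.union, inferInstance, inferInstance, Φ, τ, Y, w,
    ?_, ?_, ?_, IsUnit.of_mul_eq_one _ hYw, ?_, hYwi, ?_, hm.fMax_union.diffSimple hΦ,
    hP.pseudoDomain hm.fMax_union hΦ, ?_⟩
  · refine RingHom.ext fun x => ?_
    obtain ⟨x, rfl⟩ := Ideal.Quotient.mk_surjective x
    change Φ (τ (π x)) = τ (Φ (π x))
    rw [hτ', hΦ', hΦ', hτ']
    exact congrArg π (RingHom.congr_fun E.comm x)
  · intro a
    rw [hC, hΦ', E.f_C, hC]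
    rfl
  · intro a
    rw [hC, hτ', E.s_C, hC]
    rfl
  · have h := congrArg (fun N => Matrix.map N π) (map_pvMatrix φ σ hcomm A)
    simp only [Matrix.map_mul, Matrix.map_map] at h
    have h2 : Y.map Φ = (pvMatrix K n).map (π ∘ E.f) := by
      ext1 p q
      exact hΦ' _
    rw [h2]
    exact h
  · refine top_le_iff.1 fun x _ => ?_
    obtain ⟨x, rfl⟩ := Ideal.Quotient.mk_surjective x
    change π x ∈ _
    induction x using MvPolynomial.induction_on with
    | C a =>
      rw [← hC]
      exact Subalgebra.algebraMap_mem _ a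
    | add p q hp hq =>
      rw [map_add]
      exact add_mem (hp trivial) (hq trivial)
    | mul_X p v hp =>
      rw [map_mul]
      refine mul_mem (hp trivial) (Algebra.subset_adjoin ?_)
      rcases v with ⟨i, ⟨p, q⟩ | ⟨⟩⟩
      · exact Or.inl ⟨i, p, q, hYi i p q⟩
      · exact Or.inr ⟨i, rfl⟩
  · intro r hr
    obtain ⟨p, hp0, hp, hpr⟩ := hm.constant_algebraic hΦ r hr
    refine ⟨p.map (algebraMap K _), (Polynomial.map_ne_zero_iff (algebraMap K _).injective).2 hp0,
      fun k => ⟨p.coeff k, hp k, (Polynomial.coeff_map _ _).symm⟩, ?_⟩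
    rw [Polynomial.eval_map_algebraMap, hpr]
end
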